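/- Let n ≥ 3, m₁, m₂ ≥ 0, and λ⁺ = (0, m₂+1, …, m₂+1, m₁+m₂+1). Then for every k ∈ ℤ_{≥0}^n: c^{λ⁺}_{1|n}(k_1, k_2+1, …, k_n+1) = Σ q^{l₁p₁ + l₁ + l₃ + l₄ + ⋯ + l_n + p₂ + ⋯ + p_n} · binom_q(m₂; l₁,…,l_n) · binom_q(m₁; p₁,…,p_n), where the sum is over all l, p ∈ ℤ_{≥0}^n with l₁+⋯+l_n = m₂, p₁+⋯+p_n = m₁, and p_i + Σ_{α≠i} l_α = k_{i−1} for every 1 ≤ i ≤ n, with the convention k_0 := k_n. -/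

import Mathlib

open Finset

namespace CO

/-- The column diagram `dg'(λ)` of a composition, as a finset of boxes `(i, j)`,
`1 ≤ i ≤ n`, `1 ≤ j ≤ λ_i`. -/
def dgF (n : ℕ) (lam : ℕ → ℕ) : Finset (ℕ × ℕ) :=
  (Finset.Icc 1 n).biUnion fun i => (Finset.Icc 1 (lam i)).image fun j => (i, j)

/-- The augmented diagram `d̂g(λ)`: one extra box `(i, 0)` below each column. -/
def augF (n : ℕ) (lam : ℕ → ℕ) : Finset (ℕ × ℕ) :=
  dgF n lam ∪ (Finset.Icc 1 n).image fun i => (i, 0)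

/-- The box `d(u)` directly below a box. -/
def dbox (u : ℕ × ℕ) : ℕ × ℕ := (u.1, u.2 - 1)

/-- The augmented filling `σ̂`: equal to `σ` on positive rows and to `i` on `(i, 0)`. -/
def aug (σ : ℕ × ℕ → ℕ) (u : ℕ × ℕ) : ℕ := if u.2 = 0 then u.1 else σ u

/-- A filling takes values in `{1, …, n}` on the diagram. -/
def IsFilling (n : ℕ) (lam : ℕ → ℕ) (σ : ℕ × ℕ → ℕ) : Prop :=
  ∀ u ∈ dgF n lam, 1 ≤ σ u ∧ σ u ≤ n

/-- Attacking boxes: same row, or consecutive rows with the lower box to the right. -/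
def Attack (u v : ℕ × ℕ) : Prop :=
  u ≠ v ∧ (u.2 = v.2 ∨ (u.2 = v.2 + 1 ∧ u.1 < v.1) ∨ (v.2 = u.2 + 1 ∧ v.1 < u.1))

/-- A non-attacking filling: `σ̂` takes distinct values on attacking pairs of the
augmented diagram. -/
def NonAttacking (n : ℕ) (lam : ℕ → ℕ) (σ : ℕ × ℕ → ℕ) : Prop :=
  ∀ u ∈ augF n lam, ∀ v ∈ augF n lam, Attack u v → aug σ u ≠ aug σ v

/-- The arm of a box `u`. -/
def armF (n : ℕ) (lam : ℕ → ℕ) (u : ℕ × ℕ) : Finset (ℕ × ℕ) :=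
  ((dgF n lam).filter fun v => v.1 < u.1 ∧ v.2 = u.2 ∧ lam v.1 ≤ lam u.1) ∪
    ((augF n lam).filter fun v => u.1 < v.1 ∧ v.2 + 1 = u.2 ∧ lam v.1 < lam u.1)

/-- `a(u) = |arm(u)|`. -/
def armCard (n : ℕ) (lam : ℕ → ℕ) (u : ℕ × ℕ) : ℕ := (armF n lam u).card

/-- The number of inversions of `σ̂`: attacking pairs `u, u'` with `σ̂(u) < σ̂(u')`
and (same row with `u` to the left, or `u'` one row above `u` strictly to the left). -/
def invCard (n : ℕ) (lam : ℕ → ℕ) (σ : ℕ × ℕ → ℕ) : ℕ :=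
  ((augF n lam ×ˢ augF n lam).filter fun p =>
    aug σ p.1 < aug σ p.2 ∧
      ((p.1.2 = p.2.2 ∧ p.1.1 < p.2.1) ∨ (p.2.2 = p.1.2 + 1 ∧ p.2.1 < p.1.1))).card

/-- The descent set of `σ̂`. -/
def desF (n : ℕ) (lam : ℕ → ℕ) (σ : ℕ × ℕ → ℕ) : Finset (ℕ × ℕ) :=
  (dgF n lam).filter fun u => aug σ (dbox u) < aug σ u

/-- The statistic `coinv(σ̂)` (as an integer). -/
def coinv (n : ℕ) (lam : ℕ → ℕ) (σ : ℕ × ℕ → ℕ) : ℤ :=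
  (∑ u ∈ dgF n lam, (armCard n lam u : ℤ)) - invCard n lam σ +
    (((Finset.Icc 1 n ×ˢ Finset.Icc 1 n).filter fun p =>
      p.1 < p.2 ∧ lam p.1 ≤ lam p.2).card : ℤ) +
    ∑ u ∈ desF n lam σ, (armCard n lam u : ℤ)

/-- The statistic `T(σ)`. -/
def Tstat (n : ℕ) (lam : ℕ → ℕ) (σ : ℕ × ℕ → ℕ) : ℤ :=
  coinv n lam σ -
    ∑ u ∈ (dgF n lam).filter fun u => aug σ u ≠ aug σ (dbox u), (armCard n lam u : ℤ)

/-- Antidominant composition: `λ_1 ≤ ⋯ ≤ λ_n`. -/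
def Antidominant (n : ℕ) (lam : ℕ → ℕ) : Prop :=
  ∀ i j, 1 ≤ i → i ≤ j → j ≤ n → lam i ≤ lam j

/-- Appropriate filling: non-attacking with `T(σ) = 0`. -/
def Appropriate (n : ℕ) (lam : ℕ → ℕ) (σ : ℕ × ℕ → ℕ) : Prop :=
  IsFilling n lam σ ∧ NonAttacking n lam σ ∧ Tstat n lam σ = 0

/-- The operation `π` on compositions: `π(λ) = (λ_n + 1, λ_1, …, λ_{n-1})`. -/
def piComp (n : ℕ) (lam : ℕ → ℕ) : ℕ → ℕ :=
  fun i => if i = 1 then lam n + 1 else lam (i - 1)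

/-- The operation `π` on boxes. -/
def piBox (n : ℕ) (u : ℕ × ℕ) : ℕ × ℕ :=
  if u.1 < n then (u.1 + 1, u.2) else (1, u.2 + 1)

/-- Extension by zero of a function defined on the diagram. -/
def ext (n : ℕ) (lam : ℕ → ℕ) (f : {u // u ∈ dgF n lam} → ℕ) : ℕ × ℕ → ℕ :=
  fun u => if h : u ∈ dgF n lam then f ⟨u, h⟩ else 0

/-- `qstat(σ) = Σ (l(u) + 1)` over boxes `u` with `σ̂(u) < σ̂(d(u))`. -/
def qstat (n : ℕ) (lam : ℕ → ℕ) (σ : ℕ × ℕ → ℕ) : ℕ :=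
  ∑ u ∈ (dgF n lam).filter fun u => aug σ u < aug σ (dbox u), (lam u.1 - u.2 + 1)

end CO

namespace CO

/-- The statistic `asc(τ) = Σ (l(u) + 1)` over boxes `u = (i, j)` with `j ≥ 2` and
`τ(u) < τ(d(u))`. -/
def ascStat (n : ℕ) (mu : ℕ → ℕ) (τ : ℕ × ℕ → ℕ) : ℕ :=
  ∑ u ∈ (dgF n mu).filter fun u => 2 ≤ u.2 ∧ τ u < τ (dbox u), (mu u.1 - u.2 + 1)

/-- The greedy rule (iii): for boxes in rows `≥ 2`, with `S = τ(arm(u)) ∪ {τ(u)}`,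
`τ(u)` is the minimum of `{x ∈ S : x ≥ τ(d(u))}` if nonempty, and `min S` otherwise. -/
def GreedyRule (n : ℕ) (mu : ℕ → ℕ) (τ : ℕ × ℕ → ℕ) : Prop :=
  ∀ u ∈ dgF n mu, 2 ≤ u.2 →
    (({x ∈ τ '' ↑(armF n mu u) ∪ {τ u} | τ (dbox u) ≤ x}.Nonempty →
        τ u = sInf {x ∈ τ '' ↑(armF n mu u) ∪ {τ u} | τ (dbox u) ≤ x}) ∧
      (¬ {x ∈ τ '' ↑(armF n mu u) ∪ {τ u} | τ (dbox u) ≤ x}.Nonempty →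
        τ u = sInf (τ '' ↑(armF n mu u) ∪ {τ u})))

/-- Conditions (i)–(iv) on the fillings `τ` counted by `c_a^μ(k)`. -/
def CCond (n : ℕ) (mu : ℕ → ℕ) (a : ℕ → ℕ) (k : ℕ → ℕ) (τ : ℕ × ℕ → ℕ) : Prop :=
  (∀ u ∈ dgF n mu, 1 ≤ τ u ∧ τ u ≤ n) ∧
    (∀ j, (j, 1) ∈ dgF n mu → τ (j, 1) = a j) ∧
    (∀ u ∈ dgF n mu, ∀ v ∈ dgF n mu, Attack u v → τ u ≠ τ v) ∧
    GreedyRule n mu τ ∧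
    ∀ i, 1 ≤ i → i ≤ n → ((dgF n mu).filter fun u => τ u = i).card = k i

open Classical in
/-- The coefficient `c_a^μ(k) ∈ ℤ[q]`: the generating function `Σ_τ q^{asc(τ)}`
over fillings satisfying (i)–(iv). -/
noncomputable def cCoef (n : ℕ) (mu : ℕ → ℕ) (a : ℕ → ℕ) (k : ℕ → ℕ) : Polynomial ℤ :=
  ∑ f ∈ (Fintype.piFinset fun _ : {u // u ∈ dgF n mu} => Finset.Icc 1 n).filter
      fun f => CCond n mu a k (ext n mu f),
    Polynomial.X ^ ascStat n mu (ext n mu f)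

end CO

namespace CO

/-- Transport a `Fin n`-tuple to a function on `{1, …, n}` (1-based indexing). -/
def liftFin (n : ℕ) (k : Fin n → ℕ) : ℕ → ℕ :=
  fun i => if h : i - 1 < n then k ⟨i - 1, h⟩ else 0

/-- The statistic `stat(w)` on words with letters in `{1, …, n}`: the number of pairs
of positions `i < j` with either `w_i < w_j < n`, or `w_i = n` and `w_j < n`. -/
def wstat (n m : ℕ) (w : Fin m → ℕ) : ℕ :=
  ((Finset.univ ×ˢ Finset.univ : Finset (Fin m × Fin m)).filter fun p =>
    p.1 < p.2 ∧ ((w p.1 < w p.2 ∧ w p.2 < n) ∨ (w p.1 = n ∧ w p.2 < n))).card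

open Classical in
/-- The `q`-multinomial coefficient `binom_q(m; l)`, as the generating function of
`stat` over words of length `m` with letters in `{1, …, n}` and content `l`. -/
noncomputable def qMultinomial (n m : ℕ) (l : ℕ → ℕ) : Polynomial ℤ :=
  ∑ w ∈ (Fintype.piFinset fun _ : Fin m => Finset.Icc 1 n).filter
      fun w => ∀ t ∈ Finset.Icc 1 n, (Finset.univ.filter fun i => w i = t).card = l t,
    Polynomial.X ^ wstat n m w

end CO

namespace CO

/-- The bottom-row tuple defining `c^μ_{ã|b}` (for `s = n - 1`): entry `b` at
position `n`, and the elements of `{1, …, n} ∖ {ã, b}` in decreasing order at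
positions `2, …, n - 1`. -/
def aTuple (n atil b : ℕ) : ℕ → ℕ :=
  fun j => if j = n then b
    else ((((Finset.Icc 1 n).erase atil).erase b).sort (· ≤ ·)).getD (n - 1 - j) 0

/-- The coefficient `c^μ_{ã|b}(k)`. -/
noncomputable def cBar (n : ℕ) (mu : ℕ → ℕ) (atil b : ℕ) (k : ℕ → ℕ) : Polynomial ℤ :=
  cCoef n mu (aTuple n atil b) k

end CO

open Finset
namespace CO
section Alg
variable {K : Type*} [Field K]

/-- the `q`-integer -/
def qn (q : K) (x : ℤ) : K := (q ^ x - 1) / (q - 1)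

/-- the `q`-factorial -/
def qf (q : K) (m : ℕ) : K := ∏ i ∈ range m, qn q ((i : ℤ) + 1)

/-- the inverse `q`-factorial, zero on negative integers -/
def fi (q : K) (x : ℤ) : K := if x < 0 then 0 else (qf q x.toNat)⁻¹

/-- `q` is generic -/
def Gen (q : K) : Prop := q ≠ 0 ∧ ∀ k : ℕ, 1 ≤ k → q ^ k ≠ 1

lemma Gen.sub_ne {q : K} (h : Gen q) : q - 1 ≠ 0 := by
  have := h.2 1 le_rfl
  rw [pow_one] at this
  exact sub_ne_zero.mpr this

lemma qn_zero (q : K) : qn q 0 = 0 := by simp [qn]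

lemma qn_mul {q : K} (h : Gen q) (x : ℤ) : (q - 1) * qn q x = q ^ x - 1 := by
  unfold qn
  field_simp [h.sub_ne]

lemma qn_ne {q : K} (h : Gen q) (k : ℕ) : qn q ((k : ℤ) + 1) ≠ 0 := by
  unfold qn
  have h1 := h.2 (k + 1) (by omega)
  have h2 : q ^ ((k : ℤ) + 1) = q ^ (k + 1) := by
    rw [← zpow_natCast]; push_cast; rfl
  rw [h2]
  exact div_ne_zero (sub_ne_zero.mpr h1) h.sub_ne

lemma qn_add {q : K} (h : Gen q) (x y : ℤ) : qn q (x + y) = qn q y + q ^ y * qn q x := by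
  have := h.sub_ne
  unfold qn
  rw [zpow_add₀ h.1]
  field_simp
  ring

lemma qf_zero (q : K) : qf q 0 = 1 := by simp [qf]

lemma qf_succ (q : K) (m : ℕ) : qf q (m + 1) = qn q ((m : ℤ) + 1) * qf q m := by
  unfold qf
  rw [prod_range_succ, mul_comm]

lemma qf_ne {q : K} (h : Gen q) (m : ℕ) : qf q m ≠ 0 := by
  unfold qf
  exact prod_ne_zero_iff.mpr fun i _ => qn_ne h i

lemma fi_neg (q : K) {x : ℤ} (hx : x < 0) : fi q x = 0 := by simp [fi, hx]

lemma fi_nat (q : K) (m : ℕ) : fi q (m : ℤ) = (qf q m)⁻¹ := by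
  simp [fi]

lemma fi_zero (q : K) : fi q 0 = 1 := by simp [fi, qf_zero]

lemma fi_step {q : K} (h : Gen q) (x : ℤ) : qn q x * fi q x = fi q (x - 1) := by
  rcases lt_trichotomy x 0 with hx | hx | hx
  · rw [fi_neg q hx, fi_neg q (by omega), mul_zero]
  · subst hx
    rw [qn_zero, fi_neg q (by norm_num : (0:ℤ) - 1 < 0), zero_mul]
  · obtain ⟨m, rfl⟩ : ∃ m : ℕ, x = (m : ℤ) + 1 := ⟨(x - 1).toNat, by omega⟩
    have : ((m : ℤ) + 1) = ((m + 1 : ℕ) : ℤ) := by push_cast; rfl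
    rw [add_sub_cancel_right, fi_nat]
    nth_rewrite 2 [this]
    rw [fi_nat, qf_succ]
    have h1 := qn_ne h m
    have h2 := qf_ne h m
    field_simp

/-- the two variable sum -/
def VV (q : K) (N : ℕ) (d e : ℤ) : K :=
  ∑ p ∈ antidiagonal N, q ^ ((p.1 : ℤ) * (p.1 + d)) *
    ((fi q p.1 * fi q (p.1 + d)) * (fi q p.2 * fi q (p.2 + e)))

lemma VV_rec {q : K} (h : Gen q) (N : ℕ) (d e : ℤ) :
    qn q ((N : ℤ) + 1) * VV q (N + 1) d e =
      VV q N d (e + 1) + q ^ ((N : ℤ) + 1 + d) * VV q N (d + 1) e := by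
  have key : qn q ((N : ℤ) + 1) * VV q (N + 1) d e =
      (∑ p ∈ antidiagonal (N + 1), q ^ ((p.1 : ℤ) * (p.1 + d)) *
        ((fi q p.1 * fi q (p.1 + d)) * (qn q p.2 * fi q p.2 * fi q (p.2 + e)))) +
      (∑ p ∈ antidiagonal (N + 1), q ^ ((p.1 : ℤ) * (p.1 + d)) *
        ((q ^ (p.2 : ℤ) * (qn q p.1 * fi q p.1) * fi q (p.1 + d)) *
          (fi q p.2 * fi q (p.2 + e)))) := by
    rw [VV, mul_sum, ← sum_add_distrib]
    refine sum_congr rfl fun p hp => ?_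
    rw [HasAntidiagonal.mem_antidiagonal] at hp
    have : ((N : ℤ) + 1) = p.1 + p.2 := by exact_mod_cast hp.symm
    rw [this, qn_add h]
    ring
  rw [key, Finset.Nat.sum_antidiagonal_succ', Finset.Nat.sum_antidiagonal_succ]
  simp only [Nat.cast_zero, qn_zero, zero_mul, mul_zero, add_zero, zero_add]
  congr 1
  · unfold VV
    refine sum_congr rfl fun p _ => ?_
    rw [fi_step h]
    push_cast
    rw [add_sub_cancel_right, add_assoc, add_comm (1 : ℤ) e]
  · unfold VV
    rw [mul_sum]
    refine sum_congr rfl fun p hp => ?_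
    rw [HasAntidiagonal.mem_antidiagonal] at hp
    have : (N : ℤ) = p.1 + p.2 := by exact_mod_cast hp.symm
    rw [fi_step h, this]
    push_cast
    rw [add_sub_cancel_right, add_assoc (p.1 : ℤ) 1 d, add_comm (1 : ℤ) d]
    have e1 : q ^ (((p.1 : ℤ) + 1) * (p.1 + (d + 1))) * q ^ (p.2 : ℤ) =
      q ^ ((p.1 : ℤ) + p.2 + 1 + d) * q ^ ((p.1 : ℤ) * (p.1 + (d + 1))) := by
      rw [← zpow_add₀ h.1, ← zpow_add₀ h.1]
      congr 1
      ring
    linear_combination (fi q p.1 * fi q (p.1 + (d + 1)) * (fi q p.2 * fi q (p.2 + e))) * e1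

lemma VV_closed {q : K} (h : Gen q) (N : ℕ) : ∀ (d e : ℤ),
    VV q N d e = fi q N * fi q (N + d + e) * fi q (N + d) * fi q (N + e) *
      qf q (2 * N + d + e).toNat := by
  induction N with
  | zero =>
    intro d e
    simp only [VV, HasAntidiagonal.antidiagonal_zero, sum_singleton, Nat.cast_zero, zero_mul, zpow_zero, fi_zero,
      zero_add, mul_zero, one_mul]
    by_cases hd : d < 0
    · simp [fi_neg q hd]
    by_cases he : e < 0
    · simp [fi_neg q he]
    obtain ⟨d, rfl⟩ := Int.eq_ofNat_of_zero_le (not_lt.mp hd)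
    obtain ⟨e, rfl⟩ := Int.eq_ofNat_of_zero_le (not_lt.mp he)
    have h1 : ((d : ℤ) + e) = ((d + e : ℕ) : ℤ) := by push_cast; rfl
    rw [h1, fi_nat q (d + e), Int.toNat_natCast]
    have := qf_ne h (d + e)
    field_simp
  | succ N ih =>
    intro d e
    have h0 := qn_ne h N
    apply mul_left_cancel₀ h0
    rw [VV_rec h, ih, ih]
    have hs : fi q ((N + 1 : ℕ) : ℤ) * qn q ((N : ℤ) + 1) = fi q N := by
      have := fi_step h ((N + 1 : ℕ) : ℤ)
      push_cast at this ⊢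
      rw [add_sub_cancel_right] at this
      rw [mul_comm, this]
    have h1 : fi q (N + d) = qn q (N + 1 + d) * fi q (N + 1 + d) := by
      rw [fi_step h]; congr 1; ring
    have h2 : fi q (N + e) = qn q (N + 1 + e) * fi q (N + 1 + e) := by
      rw [fi_step h]; congr 1; ring
    have h3 : qn q (N + 1 + d) + q ^ ((N : ℤ) + 1 + d) * qn q (N + 1 + e) =
        qn q (2 * (N + 1) + d + e) := by
      rw [← qn_add h]; congr 1; ring
    have a1 : (N : ℤ) + d + (e + 1) = N + 1 + d + e := by ring
    have a2 : (N : ℤ) + (d + 1) + e = N + 1 + d + e := by ring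
    have a3 : (N : ℤ) + (e + 1) = N + 1 + e := by ring
    have a4 : (N : ℤ) + (d + 1) = N + 1 + d := by ring
    have a5 : 2 * (N : ℤ) + d + (e + 1) = 2 * N + 1 + d + e := by ring
    have a6 : 2 * (N : ℤ) + (d + 1) + e = 2 * N + 1 + d + e := by ring
    rw [a1, a2, a3, a4, a5, a6, h1, h2]
    have h4 : fi q (N + 1 + d + e) * fi q (N + 1 + d) * fi q (N + 1 + e) *
        (qf q (2 * N + 1 + d + e).toNat * qn q (2 * (N + 1) + d + e)) =
        fi q (N + 1 + d + e) * fi q (N + 1 + d) * fi q (N + 1 + e) *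
        qf q (2 * (N + 1) + d + e).toNat := by
      by_cases c1 : (N : ℤ) + 1 + d < 0
      · simp [fi_neg q c1]
      by_cases c2 : (N : ℤ) + 1 + e < 0
      · simp [fi_neg q c2]
      by_cases c3 : (N : ℤ) + 1 + d + e < 0
      · simp [fi_neg q c3]
      obtain ⟨M, hM⟩ : ∃ M : ℕ, (2 * N + 1 + d + e : ℤ) = M :=
        ⟨(2 * N + 1 + d + e : ℤ).toNat, by omega⟩
      have hM' : (2 * (N + 1) + d + e : ℤ) = (M : ℤ) + 1 := by omega
      have hM2 : ((M : ℤ) + 1).toNat = M + 1 := by omega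
      rw [hM, hM', hM2, Int.toNat_natCast, qf_succ]
      ring
    push_cast at hs ⊢
    rw [← hs]
    linear_combination (fi q ((N : ℤ) + 1) * qn q ((N : ℤ) + 1)) * h4 +
      (fi q ((N : ℤ) + 1) * qn q ((N : ℤ) + 1) * fi q (N + 1 + d + e) * fi q (N + 1 + d) *
        fi q (N + 1 + e) * qf q (2 * N + 1 + d + e).toNat) * h3

lemma VV_symm {q : K} (h : Gen q) (N : ℕ) (d e : ℤ) : VV q N d e = VV q N e d := by
  rw [VV_closed h, VV_closed h]
  have h1 : (N : ℤ) + d + e = N + e + d := by ring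
  have h2 : 2 * (N : ℤ) + d + e = 2 * N + e + d := by ring
  rw [h1, h2]
  ring

end Alg
end CO

open Finset
namespace CO
section Alg2
variable {K : Type*} [Field K]

/-- forget two coordinates -/
def zz (v w : ℕ) (s : ℕ → ℕ) : ℕ → ℕ := fun i => if i = v ∨ i = w then 0 else s i

/-- set two coordinates -/
def setvw (v w : ℕ) (r : ℕ → ℕ) (p : ℕ × ℕ) : ℕ → ℕ :=
  fun i => if i = v then p.1 else if i = w then p.2 else r i

/-- the product of the inverse factorials -/
def PP (q : K) (S : Finset ℕ) (d : ℕ → ℤ) (s : ℕ → ℕ) : K :=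
  ∏ i ∈ S, (fi q (s i) * fi q (s i + d i))

open Classical in
lemma fib_sum (q : K) (S : Finset ℕ) (v w : ℕ) (hv : v ∈ S) (hw : w ∈ S) (hvw : v ≠ w) (m : ℕ)
    (d : ℕ → ℤ) (s₀ : ℕ → ℕ) (hs : s₀ ∈ piAntidiag S m) :
    ∑ s ∈ (piAntidiag S m) with zz v w s = zz v w s₀,
      q ^ ((s v : ℤ) * (s v + d v)) * PP q S d s =
      VV q (s₀ v + s₀ w) (d v) (d w) * PP q ((S.erase v).erase w) d s₀ := by
  have hw' : w ∈ S.erase v := mem_erase.mpr ⟨hvw.symm, hw⟩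
  have hsum : ∀ s : ℕ → ℕ, ∑ i ∈ S, s i = s v + (s w + ∑ i ∈ (S.erase v).erase w, s i) := by
    intro s
    rw [add_sum_erase _ _ hw', add_sum_erase _ _ hv]
  have hprod : ∀ s : ℕ → ℕ, PP q S d s = (fi q (s v) * fi q (s v + d v)) *
      ((fi q (s w) * fi q (s w + d w)) * PP q ((S.erase v).erase w) d s) := by
    intro s
    unfold PP
    rw [mul_prod_erase _ (fun i => fi q (s i) * fi q (s i + d i)) hw',
      mul_prod_erase _ (fun i => fi q (s i) * fi q (s i + d i)) hv]
  have hne : ∀ i ∈ (S.erase v).erase w, i ≠ v ∧ i ≠ w := by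
    intro i hi
    simp only [mem_erase] at hi
    exact ⟨hi.2.1, hi.1⟩
  rw [mem_piAntidiag] at hs
  rw [VV, sum_mul]
  refine sum_nbij' (fun s => (s v, s w)) (fun p => setvw v w s₀ p) ?_ ?_ ?_ ?_ ?_
  · intro s hs'
    rw [mem_filter, mem_piAntidiag] at hs'
    obtain ⟨⟨h1, h2⟩, h3⟩ := hs'
    rw [HasAntidiagonal.mem_antidiagonal]
    have h4 : ∑ i ∈ (S.erase v).erase w, s i = ∑ i ∈ (S.erase v).erase w, s₀ i := by
      refine sum_congr rfl fun i hi => ?_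
      have := congrFun h3 i
      simpa [zz, hne i hi] using this
    have h5 := hsum s
    have h6 := hsum s₀
    have h7 : ∑ i ∈ S, s₀ i = m := hs.1
    have h8 : ∑ i ∈ S, s i = m := h1
    dsimp only
    omega
  · intro p hp
    rw [HasAntidiagonal.mem_antidiagonal] at hp
    rw [mem_filter, mem_piAntidiag]
    refine ⟨⟨?_, ?_⟩, ?_⟩
    · have h4 : ∑ i ∈ (S.erase v).erase w, setvw v w s₀ p i =
          ∑ i ∈ (S.erase v).erase w, s₀ i := by
        refine sum_congr rfl fun i hi => ?_
        simp [setvw, hne i hi]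
      have h5 := hsum (setvw v w s₀ p)
      have h6 := hsum s₀
      have h7 : ∑ i ∈ S, s₀ i = m := hs.1
      have h8 : setvw v w s₀ p v = p.1 := by simp [setvw]
      have h9 : setvw v w s₀ p w = p.2 := by simp [setvw, hvw.symm]
      change ∑ i ∈ S, setvw v w s₀ p i = m
      omega
    · intro i hi
      by_cases h1 : i = v
      · rw [h1]; exact hv
      by_cases h2 : i = w
      · rw [h2]; exact hw
      simp only [setvw, h1, h2, if_false] at hi
      exact hs.2 i hi
    · funext i
      unfold zz setvw
      grind
  · intro s hs'
    rw [mem_filter] at hs'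
    funext i
    have := congrFun hs'.2 i
    unfold zz at this
    unfold setvw
    grind
  · intro p hp
    simp [setvw, hvw.symm]
  · intro s hs'
    rw [mem_filter] at hs'
    rw [hprod s]
    have : PP q ((S.erase v).erase w) d s = PP q ((S.erase v).erase w) d s₀ := by
      refine prod_congr rfl fun i hi => ?_
      have := congrFun hs'.2 i
      have h2 : s i = s₀ i := by simpa [zz, hne i hi] using this
      rw [h2]
    rw [this]
    ring

lemma star {q : K} (h : Gen q) (S : Finset ℕ) (v w : ℕ) (hv : v ∈ S) (hw : w ∈ S) (hvw : v ≠ w)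
    (m : ℕ) (d : ℕ → ℤ) :
    ∑ s ∈ piAntidiag S m, q ^ ((s v : ℤ) * (s v + d v)) * PP q S d s =
    ∑ s ∈ piAntidiag S m, q ^ ((s w : ℤ) * (s w + d w)) * PP q S d s := by
  classical
  rw [← sum_fiberwise_of_maps_to (t := (piAntidiag S m).image (zz v w)) (g := zz v w)
    (fun x hx => mem_image_of_mem _ hx)]
  rw [← sum_fiberwise_of_maps_to (s := piAntidiag S m) (t := (piAntidiag S m).image (zz v w))
    (g := zz v w) (fun x hx => mem_image_of_mem _ hx)]
  refine sum_congr rfl fun r hr => ?_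
  obtain ⟨s₀, hs₀, rfl⟩ := mem_image.mp hr
  have hz : ∀ s, zz v w s = zz w v s := by
    intro s; funext i; simp [zz, or_comm]
  rw [fib_sum q S v w hv hw hvw m d s₀ hs₀]
  simp only [hz]
  rw [fib_sum q S w v hw hv hvw.symm m d s₀ hs₀, VV_symm h, add_comm, erase_right_comm]

/-- shift by a unit vector -/
def eb (b : ℕ) : ℕ → ℕ := fun i => if i = b then 1 else 0

lemma shift_sum (S : Finset ℕ) (b : ℕ) (hb : b ∈ S) (m : ℕ) (φ : (ℕ → ℕ) → K)
    (h0 : ∀ l, l b = 0 → φ l = 0) :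
    ∑ l ∈ piAntidiag S (m + 1), φ l = ∑ s ∈ piAntidiag S m, φ (fun i => s i + eb b i) := by
  have hsum : ∑ i ∈ S, eb b i = 1 := by simp [eb, hb]
  symm
  refine sum_of_injOn (fun s i => s i + eb b i) ?_ ?_ ?_ ?_
  · intro s _ t _ hst
    funext i
    have := congrFun hst i
    simpa using this
  · intro s hs
    rw [mem_coe, mem_piAntidiag] at hs ⊢
    refine ⟨?_, ?_⟩
    · rw [sum_add_distrib, hs.1, hsum]
    · intro i hi
      by_cases h : i = b
      · rw [h]; exact hb
      · apply hs.2
        simpa [eb, h] using hi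
  · intro l hl hn
    apply h0
    by_contra hlb
    apply hn
    rw [mem_piAntidiag] at hl
    refine ⟨fun i => l i - eb b i, ?_, ?_⟩
    · rw [mem_coe, mem_piAntidiag]
      refine ⟨?_, ?_⟩
      · have : ∑ i ∈ S, l i = ∑ i ∈ S, (l i - eb b i) + ∑ i ∈ S, eb b i := by
          rw [← sum_add_distrib]
          refine sum_congr rfl fun i _ => ?_
          unfold eb
          split_ifs with h
          · subst h; omega
          · omega
        rw [hl.1, hsum] at this
        omega
      · intro i hi
        apply hl.2
        omega
    · funext i
      dsimp only [eb]
      split_ifs with h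
      · subst h; omega
      · omega
  · intro s _
    rfl

end Alg2
end CO

open Finset
namespace CO
section Alg3
variable {K : Type*} [Field K]

/-- partial sum over `i < v` -/
def Ps (v : ℕ) (x : ℕ → ℤ) : ℤ := ∑ i ∈ Ico 1 v, x i

/-- partial sum over `a < i ≤ n` -/
def Qs (n a : ℕ) (x : ℕ → ℤ) : ℤ := ∑ i ∈ Ico (a + 1) (n + 1), x i

lemma Icc_eq (n : ℕ) : Icc 1 n = Ico 1 (n + 1) := by
  ext; simp

lemma tel (F : ℕ → K) {u v : ℕ} (h : u ≤ v) :
    ∑ c ∈ Ico u v, (F (c + 1) - F c) = F v - F u := by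
  induction v, h using Nat.le_induction with
  | base => simp
  | succ v hv ih => rw [sum_Ico_succ_top hv, ih]; ring

lemma Ps_succ (v : ℕ) (hv : 1 ≤ v) (x : ℕ → ℤ) : Ps (v + 1) x = Ps v x + x v := by
  unfold Ps; rw [sum_Ico_succ_top hv]

lemma Ps_one (x : ℕ → ℤ) : Ps 1 x = 0 := by simp [Ps]

lemma PQ (n v : ℕ) (hv : v ≤ n) (x : ℕ → ℤ) : Ps (v + 1) x + Qs n v x = ∑ i ∈ Icc 1 n, x i := by
  unfold Ps Qs
  rw [Icc_eq, sum_Ico_consecutive _ (by omega) (by omega)]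

lemma J_P {q : K} (h : Gen q) (n v : ℕ) (hv : v ∈ Icc 1 n) (p : ℕ → ℤ) (M : ℤ)
    (hM : ∑ i ∈ Icc 1 n, p i = M) :
    ∑ c ∈ Icc 1 n, q ^ ((if c < v then M else 0) + Ps c p) * qn q (p c) =
      q ^ Ps v p * qn q M := by
  rw [mem_Icc] at hv
  have h1 : Ps (n + 1) p = M := by rw [← hM, Icc_eq]; rfl
  apply mul_left_cancel₀ h.sub_ne
  have h2 : ∀ c, 1 ≤ c → (q - 1) * (q ^ ((if c < v then M else 0) + Ps c p) * qn q (p c)) =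
      q ^ (if c < v then M else 0) * (q ^ Ps (c + 1) p - q ^ Ps c p) := by
    intro c hc
    rw [Ps_succ c hc, zpow_add₀ h.1, zpow_add₀ h.1]
    linear_combination (q ^ (if c < v then M else 0) * q ^ Ps c p) * qn_mul h (p c)
  rw [mul_sum, Icc_eq, ← sum_Ico_consecutive _ hv.1 (by omega : v ≤ n + 1)]
  have e1 : ∑ c ∈ Ico 1 v, (q - 1) * (q ^ ((if c < v then M else 0) + Ps c p) * qn q (p c)) =
      q ^ M * (q ^ Ps v p - q ^ Ps 1 p) := by
    rw [← tel (fun c => q ^ Ps c p) hv.1, mul_sum]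
    refine sum_congr rfl fun c hc => ?_
    rw [mem_Ico] at hc
    rw [h2 c hc.1, if_pos hc.2]
  have e2 : ∑ c ∈ Ico v (n + 1),
      (q - 1) * (q ^ ((if c < v then M else 0) + Ps c p) * qn q (p c)) =
      q ^ Ps (n + 1) p - q ^ Ps v p := by
    rw [← tel (fun c => q ^ Ps c p) (by omega : v ≤ n + 1)]
    refine sum_congr rfl fun c hc => ?_
    rw [mem_Ico] at hc
    rw [h2 c (by omega), if_neg (by omega), zpow_zero, one_mul]
  rw [e1, e2, h1, Ps_one, zpow_zero]
  linear_combination (-q ^ Ps v p) * qn_mul h M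

lemma Qs_pred (n b : ℕ) (hb : b ≤ n) (x : ℕ → ℤ) :
    ∑ i ∈ Ico b (n + 1), x i = x b + Qs n b x := by
  unfold Qs
  rw [sum_eq_sum_Ico_succ_bot (by omega)]

lemma J_Q {q : K} (h : Gen q) (n a : ℕ) (ha : a ∈ Icc 1 n) (l : ℕ → ℤ) (M : ℤ)
    (hM : ∑ i ∈ Icc 1 n, l i = M) :
    ∑ b ∈ Icc 1 n, q ^ ((if a < b then M else 0) + Qs n b l) * qn q (l b) =
      q ^ Qs n a l * qn q M := by
  rw [mem_Icc] at ha
  apply mul_left_cancel₀ h.sub_ne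
  have h2 : ∀ c ≤ n, (q - 1) * (q ^ ((if a < c then M else 0) + Qs n c l) * qn q (l c)) =
      q ^ (if a < c then M else 0) *
        ((-q ^ (∑ i ∈ Ico (c + 1) (n + 1), l i)) - (-q ^ (∑ i ∈ Ico c (n + 1), l i))) := by
    intro c hc
    rw [Qs_pred n c hc, zpow_add₀ h.1, zpow_add₀ h.1]
    unfold Qs
    linear_combination (q ^ (if a < c then M else 0) * q ^ (∑ i ∈ Ico (c + 1) (n + 1), l i)) *
      qn_mul h (l c)
  rw [mul_sum, Icc_eq, ← sum_Ico_consecutive _ (by omega : 1 ≤ a + 1) (by omega : a + 1 ≤ n + 1)]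
  have e1 : ∑ c ∈ Ico 1 (a + 1),
      (q - 1) * (q ^ ((if a < c then M else 0) + Qs n c l) * qn q (l c)) =
      ((-q ^ (∑ i ∈ Ico (a + 1) (n + 1), l i)) - (-q ^ (∑ i ∈ Ico 1 (n + 1), l i))) := by
    rw [← tel (fun c => -q ^ (∑ i ∈ Ico c (n + 1), l i)) (by omega : 1 ≤ a + 1)]
    refine sum_congr rfl fun c hc => ?_
    rw [mem_Ico] at hc
    rw [h2 c (by omega), if_neg (by omega), zpow_zero, one_mul]
  have e2 : ∑ c ∈ Ico (a + 1) (n + 1),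
      (q - 1) * (q ^ ((if a < c then M else 0) + Qs n c l) * qn q (l c)) =
      q ^ M * ((-q ^ (∑ i ∈ Ico (n + 1) (n + 1), l i)) -
        (-q ^ (∑ i ∈ Ico (a + 1) (n + 1), l i))) := by
    rw [← tel (fun c => -q ^ (∑ i ∈ Ico c (n + 1), l i)) (by omega : a + 1 ≤ n + 1), mul_sum]
    refine sum_congr rfl fun c hc => ?_
    rw [mem_Ico] at hc
    rw [h2 c (by omega), if_pos (by omega)]
  rw [e1, e2, ← Icc_eq, hM, Ico_self, sum_empty, zpow_zero]
  unfold Qs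
  linear_combination (-q ^ (∑ i ∈ Ico (a + 1) (n + 1), l i)) * qn_mul h M

lemma J_S {q : K} (h : Gen q) (n : ℕ) (hn : 1 ≤ n) (l : ℕ → ℤ) (M : ℤ)
    (hM : ∑ i ∈ Icc 1 n, l i = M) :
    ∑ b ∈ Icc 1 n, q ^ (if b = n then ∑ i ∈ Ico 1 n, l i else ∑ i ∈ Ico (b + 1) n, l i) *
      qn q (l b) = qn q M := by
  obtain ⟨n, rfl⟩ : ∃ t, n = t + 1 := ⟨n - 1, by omega⟩
  have hM' : ∑ i ∈ Icc 1 n, l i + l (n + 1) = M := by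
    rw [← hM, Icc_eq, Icc_eq, sum_Ico_succ_top (by omega : 1 ≤ n + 1)]
  rw [Icc_eq, sum_Ico_succ_top (by omega), ← Icc_eq, if_pos rfl]
  rcases Nat.eq_zero_or_pos n with h0 | h0
  · subst h0
    simp at hM' ⊢
    rw [hM']
  have := J_Q h n n (by rw [mem_Icc]; omega) l _ rfl
  have e : ∑ b ∈ Icc 1 n, q ^ (if b = n + 1 then ∑ i ∈ Icc 1 n, l i else
      ∑ i ∈ Ico (b + 1) (n + 1), l i) * qn q (l b) = qn q (∑ i ∈ Icc 1 n, l i) := by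
    have h3 : q ^ Qs n n l = 1 := by simp [Qs]
    rw [h3, one_mul] at this
    rw [← this]
    refine sum_congr rfl fun b hb => ?_
    rw [mem_Icc] at hb
    rw [if_neg (by omega), if_neg (by omega), zero_add]
    rfl
  rw [e, ← hM', add_comm _ (l (n + 1)), qn_add h]

lemma Ps_eb (v b : ℕ) (x : ℕ → ℤ) : Ps v (fun i => x i + eb b i) =
    Ps v x + if 1 ≤ b ∧ b < v then 1 else 0 := by
  simp [Ps, sum_add_distrib, eb]

/-- the next state of the counter -/
def nxt (n v b : ℕ) : ℕ := if b = v then (if v = n then 1 else v + 1) else v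

/-- the closed formula -/
def GG (q : K) (n m a v : ℕ) (d : ℕ → ℤ) : K :=
  qf q m * qf q (m + ∑ i ∈ Icc 1 n, d i).toNat *
    ∑ l ∈ piAntidiag (Icc 1 n) m,
      q ^ (Qs n a (fun i => l i) + Ps v (fun i => l i + d i) + (l v : ℤ) * (l v + d v)) *
        PP q (Icc 1 n) d l

lemma PP_step {q : K} (h : Gen q) (S : Finset ℕ) (b : ℕ) (hb : b ∈ S) (d : ℕ → ℤ) (s : ℕ → ℕ) :
    qn q ((s b + eb b b : ℕ) : ℤ) * PP q S d (fun i => s i + eb b i) =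
      PP q S (fun i => d i + eb b i) s := by
  unfold PP
  rw [← mul_prod_erase _ _ hb, ← mul_prod_erase S
    (fun i => fi q ↑(s i) * fi q (↑(s i) + (d i + ↑(eb b i)))) hb]
  have h1 := fi_step h ((s b + eb b b : ℕ) : ℤ)
  have h2 : ((s b + eb b b : ℕ) : ℤ) - 1 = s b := by simp [eb]
  rw [h2] at h1
  rw [← h1]
  have h3 : ∏ x ∈ S.erase b, fi q ↑(s x + eb b x) * fi q (↑(s x + eb b x) + d x) =
      ∏ i ∈ S.erase b, fi q ↑(s i) * fi q (↑(s i) + (d i + ↑(eb b i))) := by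
    refine prod_congr rfl fun i hi => ?_
    have : i ≠ b := (mem_erase.mp hi).1
    simp [eb, this]
  rw [h3]
  have h4 : (((s b + eb b b : ℕ) : ℤ) + d b) = (↑(s b) + (d b + ↑(eb b b))) := by
    push_cast; ring
  rw [h4]
  ring

lemma GG_rec {q : K} (h : Gen q) (n : ℕ) (hn : 2 ≤ n) (m a v : ℕ) (ha : a ∈ Icc 1 n)
    (hv : v ∈ Icc 1 n) (d : ℕ → ℤ) (M : ℤ) (hM : (m : ℤ) + 1 + ∑ i ∈ Icc 1 n, d i = M) :
    GG q n (m + 1) a v d = ∑ b ∈ Icc 1 n,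
      q ^ ((if a < b then ((m : ℤ) + 1) else 0) + (if b = v ∧ v = n then M else 0)) *
        GG q n m b (nxt n v b) (fun i => d i + eb b i) := by
  have hd : ∀ b ∈ Icc 1 n, (m : ℤ) + ∑ i ∈ Icc 1 n, (d i + (eb b i : ℤ)) = M := by
    intro b hb
    rw [sum_add_distrib]
    have : ∑ i ∈ Icc 1 n, (eb b i : ℤ) = 1 := by
      unfold eb
      push_cast
      rw [sum_ite_eq' (Icc 1 n) b, if_pos hb]
    rw [this]; linarith
  have hM' : ((m + 1 : ℕ) : ℤ) + ∑ i ∈ Icc 1 n, d i = M := by push_cast; exact hM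
  have step1 : GG q n (m + 1) a v d = qf q m * qf q M.toNat * ∑ b ∈ Icc 1 n,
      ∑ l ∈ piAntidiag (Icc 1 n) (m + 1), q ^ ((if a < b then ((m : ℤ) + 1) else 0) +
        Qs n b (fun i => l i) + Ps v (fun i => l i + d i) + (l v : ℤ) * (l v + d v)) *
        (qn q (l b) * PP q (Icc 1 n) d l) := by
    rw [sum_comm, GG, hM', qf_succ]
    rw [mul_comm (qn q _) (qf q m), mul_assoc (qf q m), mul_comm (qn q _), ← mul_assoc,
      mul_assoc, mul_sum]
    congr 1
    refine sum_congr rfl fun l hl => ?_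
    rw [mem_piAntidiag] at hl
    have hl1 : ∑ i ∈ Icc 1 n, (l i : ℤ) = (m : ℤ) + 1 := by exact_mod_cast hl.1
    have := J_Q h n a ha (fun i => (l i : ℤ)) _ hl1
    rw [add_assoc, zpow_add₀ h.1]
    rw [show qn q ((m : ℤ) + 1) * (q ^ Qs n a (fun i => (l i : ℤ)) *
      q ^ (Ps v (fun i => (l i : ℤ) + d i) + (l v : ℤ) * (l v + d v)) * PP q (Icc 1 n) d l) =
      (q ^ Qs n a (fun i => (l i : ℤ)) * qn q ((m : ℤ) + 1)) *
      (q ^ (Ps v (fun i => (l i : ℤ) + d i) + (l v : ℤ) * (l v + d v)) * PP q (Icc 1 n) d l) by ring,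
      ← this, sum_mul]
    refine sum_congr rfl fun b _ => ?_
    rw [add_assoc (_ + _), zpow_add₀ h.1 (_ + _)]
    ring
  rw [step1, mul_sum]
  refine sum_congr rfl fun b hb => ?_
  rw [shift_sum (Icc 1 n) b hb m _ (fun l hl => by simp [hl, qn_zero])]
  rw [GG, hd b hb, mul_left_comm]
  congr 1
  have hb' := mem_Icc.mp hb
  have hv' := mem_Icc.mp hv
  have hQ : ∀ s : ℕ → ℕ, Qs n b (fun i => ((s i + eb b i : ℕ) : ℤ)) = Qs n b (fun i => s i) := by
    intro s
    refine sum_congr rfl fun i hi => ?_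
    have : i ≠ b := by rw [mem_Ico] at hi; omega
    simp [eb, this]
  have hP : ∀ s : ℕ → ℕ, (fun i => ((s i + eb b i : ℕ) : ℤ) + d i) =
      (fun i => (s i : ℤ) + (d i + eb b i)) := by
    intro s; funext i; push_cast; ring
  by_cases hbv : b = v
  · subst hbv
    set w := nxt n b b with hw
    have hw1 : w ∈ Icc 1 n ∧ b ≠ w := by
      rw [hw, mem_Icc]; unfold nxt; split_ifs <;> omega
    have hS := star h (Icc 1 n) b w hb hw1.1 hw1.2 m (fun i => d i + eb b i)
    set C : ℤ := m + Ps (b + 1) (fun i => d i + eb b i) with hC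
    have hconst : ∀ s ∈ piAntidiag (Icc 1 n) m, Qs n b (fun i => s i) +
        Ps (b + 1) (fun i => (s i : ℤ) + (d i + eb b i)) = C := by
      intro s hs
      rw [mem_piAntidiag] at hs
      have e1 : ∑ i ∈ Icc 1 n, (s i : ℤ) = (m : ℤ) := by exact_mod_cast hs.1
      have e2 := PQ n b hb'.2 (fun i => (s i : ℤ))
      have e3 : Ps (b + 1) (fun i => (s i : ℤ) + (d i + eb b i)) =
        Ps (b + 1) (fun i => (s i : ℤ)) + Ps (b + 1) (fun i => (d i + eb b i)) := by
        unfold Ps; rw [← sum_add_distrib]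
      rw [e3, hC, ← e1, ← e2]; ring
    have e1 : ∑ s ∈ piAntidiag (Icc 1 n) m,
        q ^ ((if a < b then ((m : ℤ) + 1) else 0) +
          Qs n b (fun i => ((s i + eb b i : ℕ) : ℤ)) +
          Ps b (fun i => ((s i + eb b i : ℕ) : ℤ) + d i) +
          ((s b + eb b b : ℕ) : ℤ) * (((s b + eb b b : ℕ) : ℤ) + d b)) *
        (qn q ((s b + eb b b : ℕ) : ℤ) * PP q (Icc 1 n) d (fun i => s i + eb b i)) =
        q ^ ((if a < b then ((m : ℤ) + 1) else 0) + C) *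
        ∑ s ∈ piAntidiag (Icc 1 n) m, q ^ ((s b : ℤ) * (s b + (d b + eb b b))) *
          PP q (Icc 1 n) (fun i => d i + eb b i) s := by
      rw [mul_sum]
      refine sum_congr rfl fun s hs => ?_
      rw [PP_step h _ b hb, hQ, hP, ← mul_assoc, ← zpow_add₀ h.1, ← hconst s hs,
        Ps_succ b hb'.1]
      congr 2
      simp [eb]
      ring
    rw [e1, hS, mul_sum, mul_sum]
    refine sum_congr rfl fun s hs => ?_
    rw [← mul_assoc, ← mul_assoc, ← zpow_add₀ h.1, ← zpow_add₀ h.1]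
    congr 2
    rw [← hconst s hs]
    by_cases hbn : b = n
    · have hw2 : w = 1 := by simp [hw, nxt, hbn]
      rw [hw2, Ps_one]
      have h6 := hconst s hs
      rw [hC] at h6
      have h7 := hd b hb
      rw [Icc_eq] at h7
      have h8 : Ps (b + 1) (fun i => d i + (eb b i : ℤ)) =
        ∑ i ∈ Ico 1 (n + 1), (d i + (eb b i : ℤ)) := by rw [hbn]; rfl
      have h9 : Qs n b (fun i => (s i : ℤ)) = 0 := by rw [hbn]; simp [Qs]
      have h10 : (if b = b ∧ b = n then M else 0) = M := if_pos ⟨rfl, hbn⟩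
      rw [h6, h8, h7, h9, h10]
      ring
    · have hw2 : w = b + 1 := by simp [hw, nxt, hbn]
      have h10 : (if b = b ∧ b = n then M else 0) = 0 := if_neg (fun hh => hbn hh.2)
      rw [hw2, h10]
      ring
  · rw [mul_sum]
    refine sum_congr rfl fun s hs => ?_
    rw [PP_step h _ b hb, hQ, hP, ← mul_assoc, ← zpow_add₀ h.1]
    have hv2 : eb b v = 0 := by simp [eb, Ne.symm hbv]
    have hw2 : nxt n v b = v := by simp [nxt, hbv]
    have h10 : (if b = v ∧ v = n then M else 0) = 0 := if_neg (fun hh => hbv hh.1)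
    rw [hw2, h10]
    congr 2
    simp only [hv2]
    push_cast
    ring

lemma GG_zero {q : K} (n a v : ℕ) (d : ℕ → ℤ) :
    GG q n 0 a v d = qf q (∑ i ∈ Icc 1 n, d i).toNat * (q ^ Ps v d * ∏ i ∈ Icc 1 n, fi q (d i)) := by
  simp [GG, qf_zero, Qs, PP, fi_zero]

end Alg3
end CO

open Finset
namespace CO
section Words
variable {K : Type*} [Field K]

lemma wstat_eq (n m : ℕ) (w : Fin m → ℕ) : wstat n m w = ∑ i, ∑ j, if (i < j ∧
    ((w i < w j ∧ w j < n) ∨ (w i = n ∧ w j < n))) then 1 else 0 := by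
  unfold wstat
  rw [card_filter, sum_product]

lemma wstat_succ (n m : ℕ) (w : Fin (m + 1) → ℕ) : wstat n (m + 1) w =
    (univ.filter fun j => (w 0 < Fin.tail w j ∧ Fin.tail w j < n) ∨
      (w 0 = n ∧ Fin.tail w j < n)).card + wstat n m (Fin.tail w) := by
  rw [wstat_eq, wstat_eq, Fin.sum_univ_succ, card_filter]
  congr 1
  · rw [Fin.sum_univ_succ]
    simp [Fin.tail, -sum_boole]
    refine sum_congr rfl fun _ _ => by congr
  · refine sum_congr rfl fun i _ => ?_
    rw [Fin.sum_univ_succ]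
    simp [Fin.tail, -sum_boole]
    refine sum_congr rfl fun _ _ => by congr

/-- the content of a word -/
def wc (m : ℕ) (w : Fin m → ℕ) (t : ℕ) : ℕ := (univ.filter fun i => w i = t).card

lemma wc_succ (m : ℕ) (w : Fin (m + 1) → ℕ) (t : ℕ) :
    wc (m + 1) w t = eb (w 0) t + wc m (Fin.tail w) t := by
  unfold wc
  rw [card_filter, card_filter, Fin.sum_univ_succ]
  simp [eb, Fin.tail, eq_comm]

lemma wc_sum (m : ℕ) (w : Fin m → ℕ) (S : Finset ℕ) :
    ∑ t ∈ S, wc m w t = (univ.filter fun j => w j ∈ S).card := by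
  unfold wc
  simp_rw [card_filter]
  rw [sum_comm]
  refine sum_congr rfl fun i _ => ?_
  simp

open Classical in
/-- the set of words with given integer content -/
noncomputable def WS (n m : ℕ) (l : ℕ → ℤ) : Finset (Fin m → ℕ) :=
  (Fintype.piFinset fun _ : Fin m => Finset.Icc 1 n).filter
      fun w => ∀ t ∈ Finset.Icc 1 n, (wc m w t : ℤ) = l t

lemma mem_WS (n m : ℕ) (l : ℕ → ℤ) (w : Fin m → ℕ) : w ∈ WS n m l ↔
    (∀ i, w i ∈ Icc 1 n) ∧ ∀ t ∈ Finset.Icc 1 n, (wc m w t : ℤ) = l t := by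
  simp only [WS, mem_filter, Fintype.mem_piFinset]

lemma wZ_closed {q : K} (h : Gen q) (n : ℕ) (hn : 1 ≤ n) (m : ℕ) : ∀ (l : ℕ → ℤ)
    (_ : ∑ i ∈ Icc 1 n, l i = m),
    ∑ w ∈ WS n m l, q ^ wstat n m w = qf q m * ∏ i ∈ Icc 1 n, fi q (l i) := by
  induction m with
  | zero =>
    intro l hl
    by_cases h0 : ∀ t ∈ Icc 1 n, l t = 0
    · have : WS n 0 l = {Fin.elim0} := by
        ext w
        rw [mem_WS, mem_singleton]
        refine ⟨fun _ => Subsingleton.elim _ _, fun _ => ⟨fun i => i.elim0, fun t ht => ?_⟩⟩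
        rw [h0 t ht]
        simp [wc]
      rw [this, sum_singleton, qf_zero, one_mul, prod_congr rfl (fun i hi => by rw [h0 i hi])]
      simp [fi_zero, wstat]
    · have : WS n 0 l = ∅ := by
        ext w
        rw [mem_WS]
        constructor
        · rintro ⟨_, h2⟩
          exfalso
          apply h0
          intro t ht
          rw [← h2 t ht]
          simp [wc]
        · simp
      rw [this, sum_empty]
      symm
      have h1 : ∃ t ∈ Icc 1 n, l t < 0 := by
        by_contra hc
        push Not at hc
        apply h0
        exact (sum_eq_zero_iff_of_nonneg hc).mp (by simpa using hl)
      obtain ⟨t, ht, ht2⟩ := h1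
      rw [prod_eq_zero ht (fi_neg q ht2), mul_zero]
  | succ m ih =>
    intro l hl
    have key : ∑ w ∈ WS n (m + 1) l, q ^ wstat n (m + 1) w =
        ∑ c ∈ Icc 1 n, ∑ w ∈ WS n m (fun t => l t - eb c t),
          q ^ (if c = n then ∑ i ∈ Ico 1 n, l i else ∑ i ∈ Ico (c + 1) n, l i) *
            q ^ wstat n m w := by
      rw [sum_sigma']
      refine sum_nbij' (fun w => (⟨w 0, Fin.tail w⟩ : Σ _ : ℕ, (Fin m → ℕ)))
        (fun x => Fin.cons x.1 x.2) ?_ ?_ ?_ ?_ ?_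
      · intro w hw
        rw [mem_WS] at hw
        rw [mem_sigma, mem_WS]
        refine ⟨hw.1 0, fun i => hw.1 i.succ, fun t ht => ?_⟩
        have := hw.2 t ht
        rw [wc_succ] at this
        push_cast at this
        simp only
        linarith
      · rintro ⟨c, w⟩ hw
        rw [mem_sigma, mem_WS] at hw
        rw [mem_WS]
        simp only at hw ⊢
        refine ⟨fun i => ?_, fun t ht => ?_⟩
        · refine Fin.cases ?_ (fun j => ?_) i
          · simpa using hw.1
          · simpa using hw.2.1 j
        · rw [wc_succ]
          have := hw.2.2 t ht
          rw [Fin.tail_cons, Fin.cons_zero]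
          push_cast
          linarith
      · intro w _
        exact Fin.cons_self_tail w
      · rintro ⟨c, w⟩ _
        simp
      · intro w hw
        rw [mem_WS] at hw
        have hw0 := mem_Icc.mp (hw.1 0)
        rw [wstat_succ, pow_add]
        congr 1
        rw [← zpow_natCast]
        congr 1
        simp only
        have hin : ∀ S ⊆ Icc 1 n, w 0 ∉ S → (∑ t ∈ S, l t) =
            ((univ.filter fun j => Fin.tail w j ∈ S).card : ℤ) := by
          intro S hS h0
          rw [← wc_sum]
          push_cast
          refine sum_congr rfl fun t ht => ?_
          have h1 := hw.2 t (hS ht)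
          rw [wc_succ] at h1
          have h2 : t ≠ w 0 := fun h => h0 (h ▸ ht)
          rw [← h1]
          simp [eb, h2]
        split_ifs with hc
        · rw [hin (Ico 1 n) (by intro x; simp; omega) (by simp [hc])]
          congr 2
          ext j
          have hj := mem_Icc.mp (hw.1 j.succ)
          have hj' : Fin.tail w j = w j.succ := rfl
          simp only [mem_filter, mem_univ, true_and, mem_Ico, hj']
          omega
        · rw [hin (Ico (w 0 + 1) n) (by intro x; simp; omega) (by simp)]
          congr 2
          ext j
          have hj := mem_Icc.mp (hw.1 j.succ)
          have hj' : Fin.tail w j = w j.succ := rfl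
          simp only [mem_filter, mem_univ, true_and, mem_Ico, hj']
          omega
    rw [key]
    have hl' : ∑ i ∈ Icc 1 n, l i = (m : ℤ) + 1 := by rw [hl]; push_cast; rfl
    have hJ := J_S h n hn l _ hl'
    rw [qf_succ, ← hJ, sum_mul, sum_mul]
    refine sum_congr rfl fun c hc => ?_
    rw [← mul_sum, ih]
    · rw [← mul_prod_erase _ _ hc, ← mul_prod_erase _ (fun i => fi q (l i)) hc]
      have h1 := fi_step h (l c)
      have h2 : l c - (eb c c : ℤ) = l c - 1 := by simp [eb]
      rw [h2, ← h1]
      have h3 : ∏ x ∈ (Icc 1 n).erase c, fi q (l x - (eb c x : ℤ)) =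
          ∏ x ∈ (Icc 1 n).erase c, fi q (l x) := by
        refine prod_congr rfl fun x hx => ?_
        simp [eb, (mem_erase.mp hx).1]
      rw [h3]
      ring
    · rw [sum_sub_distrib, hl']
      have : ∑ i ∈ Icc 1 n, (eb c i : ℤ) = 1 := by
        unfold eb
        push_cast
        rw [sum_ite_eq' (Icc 1 n) c, if_pos hc]
      rw [this]; ring

end Words
end CO

open Finset
namespace CO
section Peel
variable {K : Type*} [Field K]

lemma mem_dgF (n : ℕ) (mu : ℕ → ℕ) (i j : ℕ) :
    (i, j) ∈ dgF n mu ↔ 1 ≤ i ∧ i ≤ n ∧ 1 ≤ j ∧ j ≤ mu i := by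
  simp [dgF]
  tauto

/-- the cyclic order: `x` is chosen before `y` over `o` -/
def gle (o x y : ℕ) : Prop := (o ≤ x ∧ (y < o ∨ x ≤ y)) ∨ (x < o ∧ y < o ∧ x ≤ y)

/-- the fillings of the diagram, as functions extended by zero -/
structure Good (n : ℕ) (mu a : ℕ → ℕ) (κ : ℕ → ℤ) (τ : ℕ × ℕ → ℕ) : Prop where
  off : ∀ u, u ∉ dgF n mu → τ u = 0
  bd : ∀ u ∈ dgF n mu, 1 ≤ τ u ∧ τ u ≤ n
  bot : ∀ i, (i, 1) ∈ dgF n mu → τ (i, 1) = a i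
  row : ∀ i i' j, (i, j) ∈ dgF n mu → (i', j) ∈ dgF n mu → i ≠ i' → τ (i, j) ≠ τ (i', j)
  cross : ∀ i i' j, (i, j + 1) ∈ dgF n mu → (i', j) ∈ dgF n mu → i < i' →
    τ (i, j + 1) ≠ τ (i', j)
  greedy : ∀ i i' j, (i, j + 1) ∈ dgF n mu → 1 ≤ j → i' ≤ i → (i', j + 1) ∈ dgF n mu →
    gle (τ (i, j)) (τ (i, j + 1)) (τ (i', j + 1))
  cont : ∀ t ∈ Icc 1 n, (((dgF n mu).filter fun u => τ u = t).card : ℤ) = κ t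

open Classical in
/-- the finite set of fillings -/
noncomputable def FS (n : ℕ) (mu a : ℕ → ℕ) (κ : ℕ → ℤ) : Finset (ℕ × ℕ → ℕ) :=
  ((Fintype.piFinset fun _ : {u // u ∈ dgF n mu} => Finset.Icc 1 n).image (ext n mu)).filter
    (Good n mu a κ)

lemma mem_FS (n : ℕ) (mu a : ℕ → ℕ) (κ : ℕ → ℤ) (τ : ℕ × ℕ → ℕ) :
    τ ∈ FS n mu a κ ↔ Good n mu a κ τ := by
  simp only [FS, mem_filter, mem_image, Fintype.mem_piFinset, and_iff_right_iff_imp]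
  intro h
  refine ⟨fun u => τ u.1, fun u => mem_Icc.mpr (h.bd _ u.2), ?_⟩
  funext u
  unfold ext
  split_ifs with hu
  · rfl
  · exact (h.off u hu).symm

/-- the generating function with integer content -/
noncomputable def cZ (q : K) (n : ℕ) (mu a : ℕ → ℕ) (κ : ℕ → ℤ) : K :=
  ∑ τ ∈ FS n mu a κ, q ^ ascStat n mu τ

/-- remove the bottom row of a diagram -/
def prd (mu : ℕ → ℕ) : ℕ → ℕ := fun i => mu i - 1

lemma mem_prd (n : ℕ) (mu : ℕ → ℕ) (i j : ℕ) :
    (i, j) ∈ dgF n (prd mu) ↔ 1 ≤ j ∧ (i, j + 1) ∈ dgF n mu := by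
  rw [mem_dgF, mem_dgF, prd]
  omega

/-- columns of a diagram -/
def cols (n : ℕ) (mu : ℕ → ℕ) : Finset ℕ := (Icc 1 n).filter fun i => 1 ≤ mu i

lemma mem_cols (n : ℕ) (mu : ℕ → ℕ) (i : ℕ) : i ∈ cols n mu ↔ (i, 1) ∈ dgF n mu := by
  rw [mem_dgF, cols, mem_filter, mem_Icc]
  omega

lemma sum_dgF {M : Type*} [AddCommMonoid M] (n : ℕ) (mu : ℕ → ℕ) (g : ℕ × ℕ → M) :
    ∑ u ∈ dgF n mu, g u =
      ∑ i ∈ cols n mu, g (i, 1) + ∑ u ∈ dgF n (prd mu), g (u.1, u.2 + 1) := by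
  rw [← sum_filter_add_sum_filter_not (dgF n mu) (fun u => u.2 = 1)]
  congr 1
  · refine sum_nbij' (fun u => u.1) (fun i => (i, 1)) ?_ ?_ ?_ ?_ ?_
    · rintro ⟨i, j⟩ h
      rw [mem_filter] at h
      rw [mem_cols]
      obtain ⟨h1, h2⟩ := h
      simp only at h2
      subst h2
      exact h1
    · intro i hi
      rw [mem_cols] at hi
      simp [hi]
    · rintro ⟨i, j⟩ h
      rw [mem_filter] at h
      simp only at h
      simp [h.2]
    · intro i hi
      rfl
    · rintro ⟨i, j⟩ h
      rw [mem_filter] at h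
      simp only at h
      simp [h.2]
  · refine sum_nbij' (fun u => (u.1, u.2 - 1)) (fun u => (u.1, u.2 + 1)) ?_ ?_ ?_ ?_ ?_
    · rintro ⟨i, j⟩ h
      rw [mem_filter] at h
      rw [mem_prd]
      obtain ⟨h1, h2⟩ := h
      simp only at h2 ⊢
      have h3 := (mem_dgF _ _ _ _).mp h1
      have : j - 1 + 1 = j := by omega
      rw [this]
      exact ⟨by omega, h1⟩
    · rintro ⟨i, j⟩ h
      rw [mem_prd] at h
      rw [mem_filter]
      refine ⟨h.2, ?_⟩
      simp only
      omega
    · rintro ⟨i, j⟩ h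
      rw [mem_filter, mem_dgF] at h
      simp only at h
      have : j - 1 + 1 = j := by omega
      simp [this]
    · rintro ⟨i, j⟩ h
      simp
    · rintro ⟨i, j⟩ h
      rw [mem_filter, mem_dgF] at h
      simp only at h
      have : j - 1 + 1 = j := by omega
      simp [this]

lemma dgF_cols (n : ℕ) (mu : ℕ → ℕ) {i j : ℕ} (h : (i, j) ∈ dgF n mu) : i ∈ cols n mu := by
  rw [mem_dgF] at h
  rw [mem_cols, mem_dgF]
  omega

lemma cols_prd (n : ℕ) (mu : ℕ → ℕ) {i : ℕ} (h : i ∈ cols n (prd mu)) : i ∈ cols n mu := by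
  rw [mem_cols, mem_prd] at h
  exact dgF_cols n mu h.2

/-- shift a filling down by one row -/
def shiftD (τ : ℕ × ℕ → ℕ) : ℕ × ℕ → ℕ := fun u => if u.2 = 0 then 0 else τ (u.1, u.2 + 1)

/-- add a bottom row to a filling -/
def addRow (n : ℕ) (mu a : ℕ → ℕ) (σ : ℕ × ℕ → ℕ) : ℕ × ℕ → ℕ := fun u =>
  if u ∈ dgF n mu then (if u.2 = 1 then a u.1 else σ (u.1, u.2 - 1)) else 0

/-- conditions on the bottom row -/
structure RowOK (n : ℕ) (mu a : ℕ → ℕ) : Prop where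
  bd : ∀ i ∈ cols n mu, 1 ≤ a i ∧ a i ≤ n
  inj : ∀ i ∈ cols n mu, ∀ i' ∈ cols n mu, i ≠ i' → a i ≠ a i'

/-- conditions on two consecutive rows -/
structure StepOK (n : ℕ) (mu a a' : ℕ → ℕ) : Prop where
  cross : ∀ i ∈ cols n (prd mu), ∀ i' ∈ cols n mu, i < i' → a' i ≠ a i'
  greedy : ∀ i ∈ cols n (prd mu), ∀ i' ∈ cols n (prd mu), i' ≤ i → gle (a i) (a' i) (a' i')

/-- content of a row -/
def rc (n : ℕ) (mu a : ℕ → ℕ) (t : ℕ) : ℕ := ((cols n mu).filter fun i => a i = t).card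

/-- weight of a step -/
def stepw (n : ℕ) (mu a a' : ℕ → ℕ) : ℕ :=
  ∑ i ∈ (cols n (prd mu)).filter fun i => a' i < a i, prd mu i

lemma asc_peel (n : ℕ) (mu a a' : ℕ → ℕ) (κ : ℕ → ℤ) (τ : ℕ × ℕ → ℕ) (h : Good n mu a κ τ)
    (h2 : ∀ i ∈ cols n (prd mu), τ (i, 2) = a' i) :
    ascStat n mu τ = stepw n mu a a' + ascStat n (prd mu) (shiftD τ) := by
  unfold ascStat stepw
  rw [sum_filter, sum_dgF, sum_filter, sum_filter, sum_dgF, sum_dgF n (prd mu)]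
  simp only [shiftD, dbox]
  have e1 : ∀ f : ℕ → ℕ → ℕ, (∑ i ∈ cols n mu, if 2 ≤ 1 ∧ τ (i, 1) < τ (i, 1 - 1) then f i 1 else 0) = 0 := by
    intro f; simp
  simp only [show ¬ (2 ≤ 1) by omega, false_and, if_false, sum_const_zero, zero_add]
  congr 1
  · refine sum_congr rfl fun i hi => ?_
    have := cols_prd n mu hi
    rw [mem_cols] at this
    rw [← h2 i hi, ← h.bot i this]
    have h3 := (mem_dgF _ _ _ _).mp ((mem_cols _ _ _).mp hi)
    simp only [show 2 ≤ 1 + 1 by omega, true_and, show 1 + 1 - 1 = 1 by omega, show 1 + 1 = 2 by omega]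
    refine if_congr Iff.rfl ?_ rfl
    unfold prd at h3 ⊢
    omega
  · refine sum_congr rfl fun u hu => ?_
    obtain ⟨i, j⟩ := u
    rw [mem_prd] at hu
    simp only
    have e1 : j + 1 + 1 - 1 = j + 1 := by omega
    have e2 : j + 1 - 1 = j := by omega
    have e3 : ¬ (j + 1 = 0) := by omega
    have e4 : ¬ (j = 0) := by omega
    simp only [e1, e2, e3, e4, if_false]
    have e5 : 2 ≤ j + 1 := by omega
    have e6 : 2 ≤ j + 1 + 1 := by omega
    simp only [e5, e6, true_and]
    refine if_congr Iff.rfl ?_ rfl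
    unfold prd
    omega

lemma card_peel (n : ℕ) (mu a : ℕ → ℕ) (τ : ℕ × ℕ → ℕ)
    (hb : ∀ i, (i, 1) ∈ dgF n mu → τ (i, 1) = a i) (t : ℕ) :
    ((dgF n mu).filter fun u => τ u = t).card =
      rc n mu a t + ((dgF n (prd mu)).filter fun u => shiftD τ u = t).card := by
  rw [card_filter, sum_dgF, rc, card_filter, card_filter]
  congr 1
  · refine sum_congr rfl fun i hi => ?_
    rw [hb i ((mem_cols _ _ _).mp hi)]
  · refine sum_congr rfl fun u hu => ?_
    obtain ⟨i, j⟩ := u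
    rw [mem_prd] at hu
    have e4 : ¬ (j = 0) := by omega
    simp [shiftD, e4]

lemma good_shift (n : ℕ) (mu a a' : ℕ → ℕ) (κ : ℕ → ℤ) (τ : ℕ × ℕ → ℕ) (h : Good n mu a κ τ)
    (h2 : ∀ i ∈ cols n (prd mu), τ (i, 2) = a' i) :
    Good n (prd mu) a' (fun t => κ t - rc n mu a t) (shiftD τ) := by
  have e0 : ∀ i j, (i, j) ∈ dgF n (prd mu) → shiftD τ (i, j) = τ (i, j + 1) := by
    intro i j hh
    rw [mem_prd] at hh
    have : ¬ (j = 0) := by omega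
    simp [shiftD, this]
  constructor
  · rintro ⟨i, j⟩ hu
    unfold shiftD
    split_ifs with h0
    · rfl
    · apply h.off
      intro hc
      apply hu
      rw [mem_prd]
      simp only at h0
      exact ⟨by omega, hc⟩
  · rintro ⟨i, j⟩ hu
    rw [e0 i j hu]
    rw [mem_prd] at hu
    exact h.bd _ hu.2
  · intro i hi
    rw [e0 _ _ hi]
    exact h2 i ((mem_cols _ _ _).mpr hi)
  · intro i i' j hi hi' hne
    rw [e0 _ _ hi, e0 _ _ hi']
    exact h.row _ _ _ ((mem_prd _ _ _ _).mp hi).2 ((mem_prd _ _ _ _).mp hi').2 hne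
  · intro i i' j hi hi' hne
    rw [e0 _ _ hi, e0 _ _ hi']
    exact h.cross _ _ _ ((mem_prd _ _ _ _).mp hi).2 ((mem_prd _ _ _ _).mp hi').2 hne
  · intro i i' j hi hj hne hi'
    have hi0 : (i, j) ∈ dgF n (prd mu) := by
      rw [mem_dgF] at hi ⊢
      omega
    rw [e0 _ _ hi, e0 _ _ hi', e0 _ _ hi0]
    exact h.greedy _ _ _ ((mem_prd _ _ _ _).mp hi).2 (by omega) hne ((mem_prd _ _ _ _).mp hi').2
  · intro t ht
    have := h.cont t ht
    rw [card_peel n mu a τ h.bot] at this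
    push_cast at this
    linarith

lemma shift_addRow (n : ℕ) (mu a a' : ℕ → ℕ) (κ : ℕ → ℤ) (σ : ℕ × ℕ → ℕ)
    (h : Good n (prd mu) a' κ σ) : shiftD (addRow n mu a σ) = σ := by
  funext ⟨i, j⟩
  unfold shiftD addRow
  by_cases hu : (i, j) ∈ dgF n (prd mu)
  · have h2 := (mem_prd _ _ _ _).mp hu
    have : ¬ (j = 0) := by omega
    simp [this, h2.2]
  · rw [h.off _ hu]
    split_ifs with h0 h1 h2
    · rfl
    · simp only at h0 h2; omega
    · exfalso
      apply hu
      rw [mem_prd]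
      simp only at h0 h1
      exact ⟨by omega, h1⟩
    · rfl

lemma good_add (n : ℕ) (mu a a' : ℕ → ℕ) (κ : ℕ → ℤ) (σ : ℕ × ℕ → ℕ)
    (hr : RowOK n mu a) (hs : StepOK n mu a a')
    (h : Good n (prd mu) a' (fun t => κ t - rc n mu a t) σ) :
    Good n mu a κ (addRow n mu a σ) := by
  have e1 : ∀ i, (i, 1) ∈ dgF n mu → addRow n mu a σ (i, 1) = a i := by
    intro i hi
    simp [addRow, hi]
  have e2 : ∀ i j, 1 ≤ j → (i, j + 1) ∈ dgF n mu → addRow n mu a σ (i, j + 1) = σ (i, j) := by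
    intro i j hj hi
    have : j ≠ 0 := by omega
    simp [addRow, hi, this]
  constructor
  · rintro ⟨i, j⟩ hu
    simp [addRow, hu]
  · rintro ⟨i, j⟩ hu
    obtain rfl | ⟨j, rfl, hj⟩ : j = 1 ∨ ∃ j', j = j' + 1 ∧ 1 ≤ j' := by
      by_cases h1 : j = 1
      · exact Or.inl h1
      · have := (mem_dgF _ _ _ _).mp hu
        exact Or.inr ⟨j - 1, by omega, by omega⟩
    · rw [e1 _ hu]
      exact hr.bd _ ((mem_cols _ _ _).mpr hu)
    · rw [e2 _ _ hj hu]
      exact h.bd _ ((mem_prd _ _ _ _).mpr ⟨hj, hu⟩)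
  · exact e1
  · intro i i' j hu hu' hne
    obtain rfl | ⟨j, rfl, hj⟩ : j = 1 ∨ ∃ j', j = j' + 1 ∧ 1 ≤ j' := by
      by_cases h1 : j = 1
      · exact Or.inl h1
      · have := (mem_dgF _ _ _ _).mp hu
        exact Or.inr ⟨j - 1, by omega, by omega⟩
    · rw [e1 _ hu, e1 _ hu']
      exact hr.inj _ ((mem_cols _ _ _).mpr hu) _ ((mem_cols _ _ _).mpr hu') hne
    · rw [e2 _ _ hj hu, e2 _ _ hj hu']
      exact h.row _ _ _ ((mem_prd _ _ _ _).mpr ⟨hj, hu⟩) ((mem_prd _ _ _ _).mpr ⟨hj, hu'⟩) hne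
  · intro i i' j hu hu' hne
    have hj : 1 ≤ j := ((mem_dgF _ _ _ _).mp hu').2.2.1
    rw [e2 _ _ hj hu]
    have hv := (mem_prd _ _ _ _).mpr ⟨hj, hu⟩
    obtain rfl | ⟨j, rfl, hj1⟩ : j = 1 ∨ ∃ j', j = j' + 1 ∧ 1 ≤ j' := by
      by_cases h1 : j = 1
      · exact Or.inl h1
      · exact Or.inr ⟨j - 1, by omega, by omega⟩
    · rw [e1 _ hu', h.bot _ hv]
      exact hs.cross _ ((mem_cols _ _ _).mpr hv) _ ((mem_cols _ _ _).mpr hu') hne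
    · rw [e2 _ _ hj1 hu']
      exact h.cross _ _ _ hv ((mem_prd _ _ _ _).mpr ⟨hj1, hu'⟩) hne
  · intro i i' j hu hj hle hu'
    rw [e2 _ _ hj hu, e2 _ _ hj hu']
    have hv := (mem_prd _ _ _ _).mpr ⟨hj, hu⟩
    have hv' := (mem_prd _ _ _ _).mpr ⟨hj, hu'⟩
    have hw : (i, j) ∈ dgF n mu := by rw [mem_dgF] at hu ⊢; omega
    obtain rfl | ⟨j, rfl, hj1⟩ : j = 1 ∨ ∃ j', j = j' + 1 ∧ 1 ≤ j' := by
      by_cases h1 : j = 1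
      · exact Or.inl h1
      · exact Or.inr ⟨j - 1, by omega, by omega⟩
    · rw [e1 _ hw, h.bot _ hv, h.bot _ hv']
      exact hs.greedy _ ((mem_cols _ _ _).mpr hv) _ ((mem_cols _ _ _).mpr hv') hle
    · rw [e2 _ _ hj1 hw]
      exact h.greedy _ _ _ hv hj1 hle hv'
  · intro t ht
    rw [card_peel n mu a _ e1, shift_addRow n mu a a' _ σ h]
    have := h.cont t ht
    push_cast
    rw [this]
    ring

lemma add_shift (n : ℕ) (mu a : ℕ → ℕ) (κ : ℕ → ℤ) (τ : ℕ × ℕ → ℕ)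
    (h : Good n mu a κ τ) : addRow n mu a (shiftD τ) = τ := by
  funext ⟨i, j⟩
  unfold addRow shiftD
  split_ifs with h1 h2 h3
  · simp only at h2; subst h2; exact (h.bot i h1).symm
  · have := (mem_dgF _ _ _ _).mp h1
    simp only at h2 h3
    omega
  · have := (mem_dgF _ _ _ _).mp h1
    simp only at h2 h3
    have : j - 1 + 1 = j := by omega
    simp [this]
  · exact (h.off _ h1).symm

lemma peel (q : K) (n : ℕ) (mu a : ℕ → ℕ) (κ : ℕ → ℤ) (hr : RowOK n mu a)
    (B : Finset ℕ) (R : ℕ → ℕ → ℕ) (hs : ∀ b ∈ B, StepOK n mu a (R b))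
    (hd : ∀ b ∈ B, ∀ b' ∈ B, (∀ i ∈ cols n (prd mu), R b i = R b' i) → b = b')
    (hc : ∀ a', RowOK n (prd mu) a' → StepOK n mu a a' →
      ∃ b ∈ B, ∀ i ∈ cols n (prd mu), a' i = R b i) :
    cZ q n mu a κ = ∑ b ∈ B, q ^ stepw n mu a (R b) *
      cZ q n (prd mu) (R b) (fun t => κ t - rc n mu a t) := by
  have key : ∀ τ, Good n mu a κ τ → ∃ b ∈ B, ∀ i ∈ cols n (prd mu), τ (i, 2) = R b i := by
    intro τ h
    apply hc (fun i => τ (i, 2))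
    · constructor
      · intro i hi
        rw [mem_cols, mem_prd] at hi
        exact h.bd _ hi.2
      · intro i hi i' hi' hne
        rw [mem_cols, mem_prd] at hi hi'
        exact h.row _ _ _ hi.2 hi'.2 hne
    · constructor
      · intro i hi i' hi' hne
        rw [mem_cols, mem_prd] at hi
        rw [mem_cols] at hi'
        rw [← h.bot _ hi']
        exact h.cross _ _ _ hi.2 hi' hne
      · intro i hi i' hi' hle
        have h1 := (mem_cols _ _ _).mp (cols_prd _ _ hi)
        rw [mem_cols, mem_prd] at hi hi'
        rw [← h.bot _ h1]
        exact h.greedy _ _ _ hi.2 le_rfl hle hi'.2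
  unfold cZ
  simp_rw [mul_sum]
  rw [sum_sigma']
  symm
  refine sum_bij (fun x _ => addRow n mu a x.2) ?_ ?_ ?_ ?_
  · rintro ⟨b, σ⟩ hx
    rw [mem_sigma, mem_FS] at hx
    rw [mem_FS]
    exact good_add n mu a (R b) κ σ hr (hs b hx.1) hx.2
  · rintro ⟨b, σ⟩ hx ⟨b', σ'⟩ hx' he
    rw [mem_sigma, mem_FS] at hx hx'
    simp only at he hx hx'
    have h1 := shift_addRow n mu a _ _ _ hx.2
    have h2 := shift_addRow n mu a _ _ _ hx'.2
    rw [he, h2] at h1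
    subst h1
    have : b = b' := by
      apply hd b hx.1 b' hx'.1
      intro i hi
      rw [mem_cols] at hi
      rw [← hx.2.bot _ hi, ← hx'.2.bot _ hi]
    subst this
    rfl
  · intro τ hτ
    rw [mem_FS] at hτ
    obtain ⟨b, hb, h2⟩ := key τ hτ
    refine ⟨⟨b, shiftD τ⟩, ?_, add_shift n mu a κ τ hτ⟩
    rw [mem_sigma, mem_FS]
    exact ⟨hb, good_shift n mu a (R b) κ τ hτ h2⟩
  · rintro ⟨b, σ⟩ hx
    rw [mem_sigma, mem_FS] at hx
    simp only at hx ⊢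
    have hg := good_add n mu a (R b) κ σ hr (hs b hx.1) hx.2
    rw [← pow_add, asc_peel n mu a (R b) κ _ hg, shift_addRow n mu a _ _ _ hx.2]
    intro i hi
    have h3 := (mem_cols _ _ _).mp hi
    have h4 := (mem_prd _ _ _ _).mp h3
    rw [← hx.2.bot _ h3]
    simp [addRow, h4.2]

end Peel
end CO

open Finset
namespace CO
section Tail
variable {K : Type*} [Field K]

open Classical in
lemma cZ_empty (q : K) (n : ℕ) (mu a : ℕ → ℕ) (κ : ℕ → ℤ) (h0 : ∀ i ∈ Icc 1 n, mu i = 0) :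
    cZ q n mu a κ = if ∀ t ∈ Icc 1 n, κ t = 0 then 1 else 0 := by
  have hd : dgF n mu = ∅ := by
    ext ⟨i, j⟩
    rw [mem_dgF]
    constructor
    · intro h
      have := h0 i (mem_Icc.mpr ⟨h.1, h.2.1⟩)
      omega
    · simp
  have hg : ∀ τ, Good n mu a κ τ ↔ τ = 0 ∧ ∀ t ∈ Icc 1 n, κ t = 0 := by
    intro τ
    constructor
    · intro h
      refine ⟨?_, ?_⟩
      · funext u
        exact h.off u (by rw [hd]; simp)
      · intro t ht
        rw [← h.cont t ht, hd]
        simp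
    · rintro ⟨rfl, h2⟩
      constructor <;> simp_all
  unfold cZ
  split_ifs with hk
  · have : FS n mu a κ = {0} := by
      ext τ
      rw [mem_FS, hg, mem_singleton]
      tauto
    rw [this, sum_singleton]
    simp [ascStat, hd]
  · have : FS n mu a κ = ∅ := by
      ext τ
      rw [mem_FS, hg]
      exact ⟨fun h => absurd h.2 hk, fun h => absurd h (notMem_empty _)⟩
    rw [this, sum_empty]

lemma cols_single (n : ℕ) (hn : 1 ≤ n) (mu : ℕ → ℕ) (h : ℕ)
    (hmu : ∀ i ∈ Icc 1 n, mu i = if i = n then h + 1 else 0) : cols n mu = {n} := by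
  ext i
  rw [cols, mem_filter, mem_singleton]
  constructor
  · rintro ⟨h1, h2⟩
    rw [hmu i h1] at h2
    by_contra h3
    simp [h3] at h2
  · rintro rfl
    have : i ∈ Icc 1 i := by rw [mem_Icc]; omega
    refine ⟨this, ?_⟩
    rw [hmu i this]
    simp

lemma gle_refl (o x : ℕ) : gle o x x := by
  unfold gle
  omega

lemma tail_closed {q : K} (hq : Gen q) (n : ℕ) (hn : 1 ≤ n) (h : ℕ) : ∀ (mu a : ℕ → ℕ) (κ d : ℕ → ℤ)
    (_ : ∀ i ∈ Icc 1 n, prd mu i = if i = n then h else 0)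
    (_ : RowOK n mu a) (_ : a n ∈ Icc 1 n) (_ : ∀ t ∈ Icc 1 n, d t = κ t - rc n mu a t)
    (_ : ∑ t ∈ Icc 1 n, d t = h) (_ : 1 ≤ mu n),
    cZ q n mu a κ = q ^ Ps (a n) d * (qf q h * ∏ t ∈ Icc 1 n, fi q (d t)) := by
  induction h with
  | zero =>
    intro mu a κ d hmu hr hv hd hsum hmn
    have hmu0 : ∀ i ∈ Icc 1 n, prd mu i = 0 := by
      intro i hi; rw [hmu i hi]; simp
    have hcol : cols n (prd mu) = ∅ := by
      ext i
      rw [cols, mem_filter]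
      constructor
      · rintro ⟨h1, h2⟩
        rw [hmu0 i h1] at h2
        omega
      · simp
    rw [peel q n mu a κ hr {0} (fun _ => a)]
    · rw [sum_singleton, cZ_empty q n _ _ _ hmu0, stepw, hcol]
      simp only [filter_empty, sum_empty, pow_zero, one_mul]
      split_ifs with hk
      · have h1 : ∀ t ∈ Icc 1 n, d t = 0 := fun t ht => by rw [hd t ht]; exact hk t ht
        have h2 : Ps (a n) d = 0 := by
          unfold Ps
          refine sum_eq_zero fun t ht => h1 t ?_
          rw [mem_Icc] at hv ⊢
          rw [mem_Ico] at ht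
          omega
        rw [h2, prod_congr rfl (fun t ht => by rw [h1 t ht])]
        simp [qf_zero, fi_zero]
      · have h1 : ∃ t ∈ Icc 1 n, d t < 0 := by
          by_contra hc
          push Not at hc
          apply hk
          intro t ht
          rw [← hd t ht]
          exact (sum_eq_zero_iff_of_nonneg hc).mp (by simpa using hsum) t ht
        obtain ⟨t, ht, ht2⟩ := h1
        rw [prod_eq_zero ht (fi_neg q ht2), mul_zero, mul_zero]
    · intro b _
      constructor <;> simp [hcol]
    · simp
    · intro a' _ _
      exact ⟨0, by simp, by simp [hcol]⟩
  | succ h ih =>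
    intro mu a κ d hmu hr hv hd hsum hmn
    have hnm : n ∈ Icc 1 n := by rw [mem_Icc]; omega
    have hcol : cols n (prd mu) = {n} := cols_single n hn _ h hmu
    rw [peel q n mu a κ hr (Icc 1 n) (fun b _ => b)]
    · have hsum' : ∑ t ∈ Icc 1 n, d t = (h : ℤ) + 1 := by rw [hsum]; push_cast; rfl
      have hJ := J_P hq n (a n) hv d ((h : ℤ) + 1) hsum'
      have : ∀ b ∈ Icc 1 n, q ^ stepw n mu a (fun _ => b) *
          cZ q n (prd mu) (fun _ => b) (fun t => κ t - rc n mu a t) =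
          (q ^ ((if b < a n then ((h : ℤ) + 1) else 0) + Ps b d) * qn q (d b)) *
            (qf q h * ∏ t ∈ Icc 1 n, fi q (d t)) := by
        intro b hb
        rw [ih (prd mu) (fun _ => b) (fun t => κ t - rc n mu a t) (fun t => d t - eb b t)]
        · rw [zpow_add₀ hq.1]
          have e1 : q ^ stepw n mu a (fun _ => b) =
              q ^ (if b < a n then ((h : ℤ) + 1) else 0) := by
            unfold stepw
            rw [hcol, sum_filter, sum_singleton, hmu n hnm]
            rw [← zpow_natCast]
            congr 1
            split_ifs <;> simp_all
          have e2 : Ps b (fun t => d t - eb b t) = Ps b d := by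
            unfold Ps
            refine sum_congr rfl fun t ht => ?_
            have : t ≠ b := by rw [mem_Ico] at ht; omega
            simp [eb, this]
          have e3 : ∏ t ∈ Icc 1 n, fi q (d t - eb b t) = qn q (d b) * ∏ t ∈ Icc 1 n, fi q (d t) := by
            rw [← mul_prod_erase _ _ hb, ← mul_prod_erase _ (fun i => fi q (d i)) hb]
            have h1 := fi_step hq (d b)
            have h2 : d b - (eb b b : ℤ) = d b - 1 := by simp [eb]
            rw [h2, ← h1]
            have h3 : ∏ x ∈ (Icc 1 n).erase b, fi q (d x - (eb b x : ℤ)) =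
                ∏ x ∈ (Icc 1 n).erase b, fi q (d x) := by
              refine prod_congr rfl fun x hx => ?_
              simp [eb, (mem_erase.mp hx).1]
            rw [h3]
            ring
          rw [e1, e2, e3]
          ring
        · intro i hi
          rw [prd, hmu i hi]
          split_ifs <;> simp
        · constructor
          · intro i _
            exact mem_Icc.mp hb
          · rw [hcol]
            intro i hi i' hi' hne
            rw [mem_singleton] at hi hi'
            omega
        · exact hb
        · intro t ht
          have e : rc n (prd mu) (fun _ => b) t = eb b t := by
            rw [rc, hcol, filter_singleton]
            unfold eb
            by_cases h1 : t = b
            · simp [h1]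
            · have : ¬ (b = t) := fun h => h1 h.symm
              simp [h1, this]
          rw [e, hd t ht]
        · rw [sum_sub_distrib, hsum']
          have : ∑ i ∈ Icc 1 n, (eb b i : ℤ) = 1 := by
            unfold eb
            push_cast
            rw [sum_ite_eq' (Icc 1 n) b, if_pos hb]
          rw [this]; ring
        · rw [hmu n hnm]
          simp
      rw [sum_congr rfl this, ← sum_mul, hJ, qf_succ]
      ring
    · intro b hb
      constructor
      · rw [hcol]
        intro i hi i' hi' hlt
        rw [mem_singleton] at hi
        rw [cols, mem_filter, mem_Icc] at hi'
        omega
      · intro i _ i' _ _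
        exact gle_refl _ _
    · intro b _ b' _ hh
      exact hh n (by rw [hcol]; simp)
    · intro a' hr' _
      refine ⟨a' n, mem_Icc.mpr (hr'.bd n (by rw [hcol]; simp)), ?_⟩
      intro i hi
      rw [hcol, mem_singleton] at hi
      rw [hi]

end Tail
end CO

open Finset
namespace CO
section Rows
variable {K : Type*} [Field K]

lemma gle_exists (o : ℕ) (W : Finset ℕ) (hW : W.Nonempty) : ∃ x ∈ W, ∀ y ∈ W, gle o x y := by
  by_cases h : (W.filter fun y => o ≤ y).Nonempty
  · have h1 := min'_mem _ h
    rw [mem_filter] at h1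
    refine ⟨_, h1.1, fun y hy => ?_⟩
    left
    refine ⟨h1.2, ?_⟩
    by_cases hy2 : y < o
    · exact Or.inl hy2
    · right
      exact min'_le _ _ (mem_filter.mpr ⟨hy, by omega⟩)
  · have h2 : ∀ y ∈ W, y < o := by
      intro y hy
      by_contra hc
      exact h ⟨y, mem_filter.mpr ⟨hy, by omega⟩⟩
    exact ⟨_, min'_mem W hW, fun y hy => Or.inr ⟨h2 _ (min'_mem W hW), h2 y hy, min'_le _ _ hy⟩⟩

lemma gle_antisymm {o x y : ℕ} (h1 : gle o x y) (h2 : gle o y x) : x = y := by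
  unfold gle at h1 h2
  omega

/-- a greedy row on the columns `2, …, t + 1` -/
structure GRow (o : ℕ → ℕ) (t : ℕ) (w : ℕ → ℕ) : Prop where
  inj : ∀ i ∈ Icc 2 (t + 1), ∀ i' ∈ Icc 2 (t + 1), i ≠ i' → w i ≠ w i'
  greedy : ∀ i ∈ Icc 2 (t + 1), ∀ i' ∈ Icc 2 (t + 1), i' ≤ i → gle (o i) (w i) (w i')

/-- the image of a row -/
def img (t : ℕ) (w : ℕ → ℕ) : Finset ℕ := (Icc 2 (t + 1)).image w

lemma mem_img {t : ℕ} {w : ℕ → ℕ} {x : ℕ} : x ∈ img t w ↔ ∃ i ∈ Icc 2 (t + 1), w i = x := by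
  simp only [img, mem_image]

lemma GRow.pred {o : ℕ → ℕ} {t : ℕ} {w : ℕ → ℕ} (h : GRow o (t + 1) w) : GRow o t w := by
  have hs : ∀ i ∈ Icc 2 (t + 1), i ∈ Icc 2 (t + 1 + 1) := by
    intro i hi; rw [mem_Icc] at hi ⊢; omega
  exact ⟨fun i hi i' hi' => h.inj i (hs i hi) i' (hs i' hi'),
    fun i hi i' hi' => h.greedy i (hs i hi) i' (hs i' hi')⟩

lemma img_pred (t : ℕ) (w : ℕ → ℕ)
    (h : ∀ i ∈ Icc 2 (t + 1 + 1), ∀ i' ∈ Icc 2 (t + 1 + 1), i ≠ i' → w i ≠ w i') :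
    img t w = (img (t + 1) w).erase (w (t + 2)) := by
  ext x
  rw [mem_erase, mem_img, mem_img]
  constructor
  · rintro ⟨i, hi, rfl⟩
    rw [mem_Icc] at hi
    refine ⟨?_, i, mem_Icc.mpr (by omega), rfl⟩
    exact h i (mem_Icc.mpr (by omega)) _ (mem_Icc.mpr (by omega)) (by omega)
  · rintro ⟨hne, i, hi, rfl⟩
    rw [mem_Icc] at hi
    have : i ≠ t + 2 := fun h => hne (by rw [h])
    exact ⟨i, mem_Icc.mpr (by omega), rfl⟩

lemma img_last (t : ℕ) (w : ℕ → ℕ) : w (t + 2) ∈ img (t + 1) w :=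
  mem_img.mpr ⟨t + 2, mem_Icc.mpr (by omega), rfl⟩

lemma row_exists (o : ℕ → ℕ) (t : ℕ) : ∀ W : Finset ℕ, W.card = t →
    ∃ w, GRow o t w ∧ img t w = W := by
  induction t with
  | zero =>
    intro W hW
    refine ⟨fun _ => 0, ⟨?_, ?_⟩, ?_⟩
    · intro i hi; rw [mem_Icc] at hi; omega
    · intro i hi; rw [mem_Icc] at hi; omega
    · rw [card_eq_zero] at hW
      rw [hW]; rfl
  | succ t ih =>
    intro W hW
    obtain ⟨x, hx, hx2⟩ := gle_exists (o (t + 2)) W (by rw [← card_pos]; omega)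
    obtain ⟨w, hw, hw2⟩ := ih (W.erase x) (by rw [card_erase_of_mem hx]; omega)
    have hmem : ∀ i ∈ Icc 2 (t + 1), w i ∈ W.erase x := fun i hi => by
      rw [← hw2]; exact mem_img.mpr ⟨i, hi, rfl⟩
    have e1 : ∀ i ∈ Icc 2 (t + 1), (if i = t + 2 then x else w i) = w i := by
      intro i hi
      rw [mem_Icc] at hi
      rw [if_neg (by omega)]
    have hcase : ∀ i ∈ Icc 2 (t + 1 + 1), i = t + 2 ∨ i ∈ Icc 2 (t + 1) := by
      intro i hi; rw [mem_Icc] at hi ⊢; omega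
    refine ⟨fun i => if i = t + 2 then x else w i, ⟨?_, ?_⟩, ?_⟩
    · intro i hi i' hi' hne
      rcases hcase i hi with rfl | h <;> rcases hcase i' hi' with rfl | h'
      · omega
      · rw [if_pos rfl, e1 _ h']
        exact fun hh => (mem_erase.mp (hmem _ h')).1 hh.symm
      · rw [if_pos rfl, e1 _ h]
        exact fun hh => (mem_erase.mp (hmem _ h)).1 hh
      · rw [e1 _ h, e1 _ h']
        exact hw.inj _ h _ h' hne
    · intro i hi i' hi' hle
      rcases hcase i hi with rfl | h <;> rcases hcase i' hi' with rfl | h'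
      · exact gle_refl _ _
      · rw [if_pos rfl, e1 _ h']
        exact hx2 _ (mem_erase.mp (hmem _ h')).2
      · rw [mem_Icc] at h; omega
      · rw [e1 _ h, e1 _ h']
        exact hw.greedy _ h _ h' hle
    · ext y
      rw [mem_img]
      constructor
      · rintro ⟨i, hi, rfl⟩
        rcases hcase i hi with rfl | h
        · rw [if_pos rfl]; exact hx
        · rw [e1 _ h]; exact (mem_erase.mp (hmem _ h)).2
      · intro hy
        by_cases hyx : y = x
        · exact ⟨t + 2, mem_Icc.mpr (by omega), by simp [hyx]⟩
        · have : y ∈ img t w := by rw [hw2]; exact mem_erase.mpr ⟨hyx, hy⟩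
          obtain ⟨i, hi, rfl⟩ := mem_img.mp this
          exact ⟨i, by rw [mem_Icc] at hi ⊢; omega, e1 i hi⟩

lemma GRow.last {o : ℕ → ℕ} {t : ℕ} {w : ℕ → ℕ} (h : GRow o (t + 1) w) {y : ℕ}
    (hy : y ∈ img (t + 1) w) : gle (o (t + 2)) (w (t + 2)) y := by
  obtain ⟨i, hi, rfl⟩ := mem_img.mp hy
  exact h.greedy _ (mem_Icc.mpr (by omega)) _ hi (by rw [mem_Icc] at hi; omega)

lemma row_unique (o : ℕ → ℕ) (t : ℕ) : ∀ w w' : ℕ → ℕ, GRow o t w → GRow o t w' →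
    img t w = img t w' → ∀ i ∈ Icc 2 (t + 1), w i = w' i := by
  induction t with
  | zero => intro w w' _ _ _ i hi; rw [mem_Icc] at hi; omega
  | succ t ih =>
    intro w w' h h' he i hi
    have e : w (t + 2) = w' (t + 2) :=
      gle_antisymm (h.last (by rw [he]; exact img_last t w'))
        (h'.last (by rw [← he]; exact img_last t w))
    by_cases h1 : i = t + 2
    · rw [h1, e]
    · refine ih w w' h.pred h'.pred ?_ i (by rw [mem_Icc] at hi ⊢; omega)
      rw [img_pred t w h.inj, img_pred t w' h'.inj, he, e]

lemma row_wrap (o : ℕ → ℕ) (t : ℕ) : ∀ (w : ℕ → ℕ) (a b : ℕ), GRow o t w →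
    (∀ i ∈ Icc 2 (t + 1), ∀ i' ∈ Icc 2 (t + 1), i ≠ i' → o i ≠ o i') →
    insert b (img t w) = insert a (img t o) → b ∉ img t w → a ∉ img t o →
    ((Icc 2 (t + 1)).filter fun i => w i < o i).card = (if a < b then 1 else 0) ∧
    ∀ i ∈ Icc 2 (t + 1), ∀ i' ∈ Icc 2 (t + 1), i < i' → w i ≠ o i' := by
  induction t with
  | zero =>
    intro w a b _ _ he _ _
    have h1 : ∀ w, img 0 w = ∅ := fun w => rfl
    rw [h1, h1] at he
    have : a = b := by
      have : b ∈ insert a (∅ : Finset ℕ) := by rw [← he]; simp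
      simpa [eq_comm] using this
    refine ⟨by simp [this], ?_⟩
    intro i hi; rw [mem_Icc] at hi; omega
  | succ t ih =>
    intro w a b h ho he hb ha
    have ho' : ∀ i ∈ Icc 2 (t + 1), ∀ i' ∈ Icc 2 (t + 1), i ≠ i' → o i ≠ o i' := by
      intro i hi i' hi'
      exact ho i (by rw [mem_Icc] at hi ⊢; omega) i' (by rw [mem_Icc] at hi' ⊢; omega)
    have hcard : ((Icc 2 (t + 1 + 1)).filter fun i => w i < o i).card =
        ((Icc 2 (t + 1)).filter fun i => w i < o i).card +
          (if w (t + 2) < o (t + 2) then 1 else 0) := by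
      rw [card_filter, card_filter, sum_Icc_succ_top (by omega)]
    have hw1 := img_pred t w h.inj
    have ho1 := img_pred t o ho
    have hol := img_last t o
    have hwl := img_last t w
    by_cases hy : o (t + 2) ∈ img (t + 1) w
    · have e : w (t + 2) = o (t + 2) := by
        have := h.last hy
        unfold gle at this
        omega
      have hne : b ≠ o (t + 2) := fun hh => hb (hh ▸ hy)
      have hne2 : a ≠ o (t + 2) := fun hh => ha (hh ▸ hol)
      have he' : insert b (img t w) = insert a (img t o) := by
        rw [hw1, ho1, e, ← erase_insert_of_ne hne, ← erase_insert_of_ne hne2, he]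
      obtain ⟨r1, r2⟩ := ih w a b h.pred ho' he' (by rw [hw1]; exact fun hh => hb (mem_erase.mp hh).2)
        (by rw [ho1]; exact fun hh => ha (mem_erase.mp hh).2)
      refine ⟨?_, ?_⟩
      · rw [hcard, r1, e]; simp
      · intro i hi i' hi' hlt
        by_cases h2 : i' = t + 2
        · rw [h2, ← e]
          exact h.inj i hi _ (mem_Icc.mpr (by omega)) (by omega)
        · rw [mem_Icc] at hi hi'
          exact r2 i (mem_Icc.mpr (by omega)) i' (mem_Icc.mpr (by omega)) hlt
    · have hob : o (t + 2) = b := by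
        have : o (t + 2) ∈ insert b (img (t + 1) w) := by
          rw [he]; exact mem_insert_of_mem hol
        rcases mem_insert.mp this with h1 | h1
        · exact h1
        · exact absurd h1 hy
      have hab : a ≠ b := fun hh => ha (by rw [hh, ← hob]; exact hol)
      have hWe : img (t + 1) w = insert a (img t o) := by
        rw [ho1, hob, ← erase_insert_of_ne hab, ← he, erase_insert hb]
      have haW : a ∈ img (t + 1) w := by rw [hWe]; simp
      obtain ⟨r1, r2⟩ := ih w a (w (t + 2)) h.pred ho' (by rw [hw1, insert_erase hwl, hWe])
        (by rw [hw1]; simp) (by rw [ho1]; exact fun hh => ha (mem_erase.mp hh).2)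
      have hg := h.last haW
      have hxb : w (t + 2) ≠ b := fun hh => hb (hh ▸ hwl)
      refine ⟨?_, ?_⟩
      · rw [hcard, r1, hob]
        rw [hob] at hg
        unfold gle at hg
        split_ifs <;> omega
      · intro i hi i' hi' hlt
        by_cases h2 : i' = t + 2
        · rw [h2, hob]
          exact fun hh => hb (hh ▸ mem_img.mpr ⟨i, hi, rfl⟩)
        · rw [mem_Icc] at hi hi'
          exact r2 i (mem_Icc.mpr (by omega)) i' (mem_Icc.mpr (by omega)) hlt

end Rows
end CO

open Finset
namespace CO
section Full
variable {K : Type*} [Field K]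

/-- the shape with a row of zeros removed -/
def ShapeOK (n m₁ m : ℕ) (mu : ℕ → ℕ) : Prop :=
  ∀ i ∈ Icc 1 n, mu i = if i = n then m₁ + m + 1 else if 2 ≤ i then m + 1 else 0

lemma ShapeOK.cols {n m₁ m : ℕ} {mu : ℕ → ℕ} (hn : 2 ≤ n) (h : ShapeOK n m₁ m mu) :
    cols n mu = Icc 2 n := by
  ext i
  rw [CO.cols, mem_filter]
  constructor
  · rintro ⟨h1, h2⟩
    rw [h i h1] at h2
    rw [mem_Icc] at h1 ⊢
    split_ifs at h2 <;> omega
  · intro h1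
    rw [mem_Icc] at h1
    have h2 : i ∈ Icc 1 n := mem_Icc.mpr (by omega)
    refine ⟨h2, ?_⟩
    rw [h i h2]
    split_ifs <;> omega

lemma ShapeOK.prd {n m₁ m : ℕ} {mu : ℕ → ℕ} (h : ShapeOK n m₁ (m + 1) mu) :
    ShapeOK n m₁ m (prd mu) := by
  intro i hi
  rw [CO.prd, h i hi]
  split_ifs <;> omega

/-- a full row missing the letter `z` -/
structure StateOK (n : ℕ) (a : ℕ → ℕ) (z : ℕ) : Prop where
  hz : z ∈ Icc 1 n
  bd : ∀ i ∈ Icc 2 n, a i ∈ Icc 1 n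
  inj : ∀ i ∈ Icc 2 n, ∀ i' ∈ Icc 2 n, i ≠ i' → a i ≠ a i'
  ne : ∀ i ∈ Icc 2 n, a i ≠ z

lemma card_img (t : ℕ) (w : ℕ → ℕ)
    (h : ∀ i ∈ Icc 2 (t + 1), ∀ i' ∈ Icc 2 (t + 1), i ≠ i' → w i ≠ w i') : (img t w).card = t := by
  rw [img, card_image_of_injOn]
  · simp
  · intro i hi i' hi' he
    by_contra hc
    exact h i hi i' hi' hc he

lemma StateOK.img {t : ℕ} {a : ℕ → ℕ} {z : ℕ} (h : StateOK (t + 1) a z) :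
    img t a = (Icc 1 (t + 1)).erase z := by
  apply eq_of_subset_of_card_le
  · intro x hx
    obtain ⟨i, hi, rfl⟩ := mem_img.mp hx
    exact mem_erase.mpr ⟨h.ne i hi, h.bd i hi⟩
  · rw [card_img t a h.inj, card_erase_of_mem h.hz]
    simp

lemma StateOK.rc {n : ℕ} {a : ℕ → ℕ} {z : ℕ} (h : StateOK n a z) (hn : 2 ≤ n) (mu : ℕ → ℕ)
    (hc : cols n mu = Icc 2 n) (s : ℕ) (hs : s ∈ Icc 1 n) :
    rc n mu a s = if s = z then 0 else 1 := by
  obtain ⟨t, rfl⟩ : ∃ t, n = t + 1 := ⟨n - 1, by omega⟩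
  rw [CO.rc, hc]
  split_ifs with hsz
  · rw [card_eq_zero, filter_eq_empty_iff]
    intro i hi
    rw [hsz]
    exact h.ne i hi
  · have : s ∈ CO.img t a := by rw [h.img]; exact mem_erase.mpr ⟨hsz, hs⟩
    obtain ⟨i, hi, rfl⟩ := mem_img.mp this
    rw [card_eq_one]
    refine ⟨i, ?_⟩
    ext i'
    rw [mem_filter, mem_singleton]
    constructor
    · rintro ⟨h1, h2⟩
      by_contra hne
      exact h.inj i' h1 i hi hne h2
    · rintro rfl
      exact ⟨hi, rfl⟩

lemma StateOK.rowOK {n : ℕ} {a : ℕ → ℕ} {z : ℕ} (h : StateOK n a z) (mu : ℕ → ℕ)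
    (hc : cols n mu = Icc 2 n) : RowOK n mu a := by
  constructor
  · rw [hc]; exact fun i hi => mem_Icc.mp (h.bd i hi)
  · rw [hc]; exact h.inj

lemma StateOK.of_img {t : ℕ} {w : ℕ → ℕ} {b : ℕ} (hb : b ∈ Icc 1 (t + 1))
    (hi : ∀ i ∈ Icc 2 (t + 1), ∀ i' ∈ Icc 2 (t + 1), i ≠ i' → w i ≠ w i')
    (h : CO.img t w = (Icc 1 (t + 1)).erase b) : StateOK (t + 1) w b := by
  refine ⟨hb, ?_, hi, ?_⟩
  · intro i hi
    have : w i ∈ CO.img t w := mem_img.mpr ⟨i, hi, rfl⟩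
    rw [h] at this
    exact (mem_erase.mp this).2
  · intro i hi
    have : w i ∈ CO.img t w := mem_img.mpr ⟨i, hi, rfl⟩
    rw [h] at this
    exact (mem_erase.mp this).1

lemma last_nxt {n v b x : ℕ} (hn : 2 ≤ n) (hv : v ∈ Icc 1 n)
    (hx : x ∈ (Icc 1 n).erase b) (hg : ∀ y ∈ (Icc 1 n).erase b, gle v x y) : x = nxt n v b := by
  rw [mem_erase, mem_Icc] at hx
  rw [mem_Icc] at hv
  have hg' : ∀ y, y ≠ b → 1 ≤ y → y ≤ n → gle v x y := fun y h1 h2 h3 =>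
    hg y (mem_erase.mpr ⟨h1, mem_Icc.mpr ⟨h2, h3⟩⟩)
  unfold gle at hg'
  unfold nxt
  split_ifs with h1 h2
  · have := hg' 1 (by omega) (by omega) (by omega)
    omega
  · have := hg' (v + 1) (by omega) (by omega) (by omega)
    omega
  · have := hg' v (by omega) (by omega) (by omega)
    omega

theorem full_closed {q : K} (hq : Gen q) (n : ℕ) (hn : 2 ≤ n) (m₁ m : ℕ) :
    ∀ (mu a : ℕ → ℕ) (z : ℕ) (κ d : ℕ → ℤ) (_ : ShapeOK n m₁ m mu) (_ : StateOK n a z)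
    (_ : ∀ t ∈ Icc 1 n, d t = κ t - m - (if t = z then 0 else 1))
    (_ : (m : ℤ) + ∑ t ∈ Icc 1 n, d t = m₁),
    cZ q n mu a κ = GG q n m z (a n) d := by
  have hnn : n ∈ Icc 2 n := mem_Icc.mpr (by omega)
  have hn1 : n ∈ Icc 1 n := mem_Icc.mpr (by omega)
  induction m with
  | zero =>
    intro mu a z κ d hmu hs hd hsum
    have hsum' : ∑ t ∈ Icc 1 n, d t = m₁ := by simpa using hsum
    rw [GG_zero, hsum', Int.toNat_natCast,
      tail_closed hq n (by omega) m₁ mu a κ d _ (hs.rowOK mu (hmu.cols hn)) (hs.bd n hnn) _ hsum' _]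
    · ring
    · intro i hi
      rw [prd, hmu i hi]
      split_ifs <;> omega
    · intro t ht
      rw [hd t ht, hs.rc hn mu (hmu.cols hn) t ht]
      push_cast
      split_ifs <;> ring
    · rw [hmu n hn1]; simp
  | succ m ih =>
    intro mu a z κ d hmu hs hd hsum
    have hc := hmu.cols hn
    have hc' := hmu.prd.cols hn
    obtain ⟨t, rfl⟩ : ∃ t, n = t + 2 := ⟨n - 2, by omega⟩
    have hex : ∀ b, ∃ w, b ∈ Icc 1 (t + 2) → GRow a (t + 1) w ∧
        img (t + 1) w = (Icc 1 (t + 2)).erase b := by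
      intro b
      by_cases hb : b ∈ Icc 1 (t + 2)
      · obtain ⟨w, h1, h2⟩ := row_exists a (t + 1) ((Icc 1 (t + 2)).erase b)
          (by rw [card_erase_of_mem hb]; simp)
        exact ⟨w, fun _ => ⟨h1, h2⟩⟩
      · exact ⟨a, fun h => absurd h hb⟩
    choose R hR using hex
    have hRs : ∀ b ∈ Icc 1 (t + 2), StateOK (t + 2) (R b) b := fun b hb =>
      StateOK.of_img hb (hR b hb).1.inj (hR b hb).2
    have hRw : ∀ b ∈ Icc 1 (t + 2), _ := fun b hb =>
      row_wrap a (t + 1) (R b) z b (hR b hb).1 hs.inj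
        (by rw [(hR b hb).2, hs.img, insert_erase hb, insert_erase hs.hz])
        (by rw [(hR b hb).2]; simp) (by rw [hs.img]; simp)
    have hRn : ∀ b ∈ Icc 1 (t + 2), R b (t + 2) = nxt (t + 2) (a (t + 2)) b := by
      intro b hb
      apply last_nxt hn (hs.bd _ hnn)
      · rw [← (hR b hb).2]; exact img_last t _
      · intro y hy
        rw [← (hR b hb).2] at hy
        exact (hR b hb).1.last hy
    rw [peel q (t + 2) mu a κ (hs.rowOK mu hc) (Icc 1 (t + 2)) R]
    · have hM : (m : ℤ) + 1 + ∑ i ∈ Icc 1 (t + 2), d i = m₁ := by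
        rw [← hsum]; push_cast; ring
      rw [GG_rec hq (t + 2) hn m z (a (t + 2)) hs.hz (hs.bd _ hnn) d m₁ hM]
      refine sum_congr rfl fun b hb => ?_
      rw [ih (prd mu) (R b) b (fun s => κ s - rc (t + 2) mu a s) (fun i => d i + eb b i)
        hmu.prd (hRs b hb), hRn b hb]
      · congr 1
        rw [← zpow_natCast]
        congr 1
        unfold stepw
        rw [hc', sum_filter]
        have e1 : ∀ i ∈ Icc 2 (t + 2), (if R b i < a i then prd mu i else 0) =
            (m + 1) * (if R b i < a i then 1 else 0) +
              (if i = t + 2 then (if R b i < a i then m₁ else 0) else 0) := by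
          intro i hi
          rw [prd, hmu i (by rw [mem_Icc] at hi ⊢; omega)]
          have h2 : 2 ≤ i := (mem_Icc.mp hi).1
          simp only [h2, if_true]
          split_ifs <;> omega
        rw [sum_congr rfl e1, sum_add_distrib, ← mul_sum, ← card_filter, (hRw b hb).1,
          sum_ite_eq' (Icc 2 (t + 2)) (t + 2), if_pos hnn, hRn b hb]
        have hv := mem_Icc.mp (hs.bd _ hnn)
        have e2 : nxt (t + 2) (a (t + 2)) b < a (t + 2) ↔ b = a (t + 2) ∧ a (t + 2) = t + 2 := by
          unfold nxt
          split_ifs <;> omega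
        rw [if_congr e2 rfl rfl]
        push_cast
        split_ifs <;> simp
      · intro s hs'
        rw [hs.rc hn mu hc s hs', hd s hs']
        unfold eb
        push_cast
        split_ifs <;> ring
      · rw [sum_add_distrib]
        have : ∑ i ∈ Icc 1 (t + 2), (eb b i : ℤ) = 1 := by
          unfold eb
          push_cast
          rw [sum_ite_eq' (Icc 1 (t + 2)) b, if_pos hb]
        rw [this, ← hM]; ring
    · intro b hb
      constructor
      · rw [hc, hc']
        exact (hRw b hb).2
      · rw [hc']
        exact (hR b hb).1.greedy
    · intro b hb b' hb' he
      rw [hc'] at he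
      have h1 : img (t + 1) (R b) = img (t + 1) (R b') := by
        unfold img
        exact image_congr (fun i hi => he i hi)
      rw [(hR b hb).2, (hR b' hb').2] at h1
      by_contra hne
      have : b ∈ (Icc 1 (t + 2)).erase b' := mem_erase.mpr ⟨hne, hb⟩
      rw [← h1] at this
      simp at this
    · intro a' hr' hs'
      have hg : GRow a (t + 1) a' := by
        refine ⟨?_, ?_⟩
        · have := hr'.inj
          rwa [hc'] at this
        · have := hs'.greedy
          rwa [hc'] at this
      have hsub : img (t + 1) a' ⊆ Icc 1 (t + 2) := by
        intro x hx
        obtain ⟨i, hi, rfl⟩ := mem_img.mp hx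
        exact mem_Icc.mpr (hr'.bd i (by rw [hc']; exact hi))
      have hcd : (img (t + 1) a').card = t + 1 := card_img _ _ hg.inj
      have hne : ∃ b ∈ Icc 1 (t + 2), b ∉ img (t + 1) a' := by
        by_contra hcon
        push Not at hcon
        have := card_le_card (show Icc 1 (t + 2) ⊆ img (t + 1) a' from hcon)
        rw [hcd] at this
        simp at this
      obtain ⟨b, hb, hb2⟩ := hne
      refine ⟨b, hb, ?_⟩
      rw [hc']
      apply row_unique a (t + 1) a' (R b) hg (hR b hb).1
      rw [(hR b hb).2]
      apply eq_of_subset_of_card_le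
      · intro x hx
        exact mem_erase.mpr ⟨fun h => hb2 (h ▸ hx), hsub hx⟩
      · rw [hcd, card_erase_of_mem hb]
        simp

end Full
end CO

open Finset
namespace CO
section Trans
variable {K : Type*} [Field K]

lemma rule_iff (S : Set ℕ) (o x : ℕ) (hx : x ∈ S) :
    (({y ∈ S | o ≤ y}.Nonempty → x = sInf {y ∈ S | o ≤ y}) ∧
      (¬ {y ∈ S | o ≤ y}.Nonempty → x = sInf S)) ↔ ∀ y ∈ S, gle o x y := by
  constructor
  · rintro ⟨h1, h2⟩ y hy
    by_cases hne : {y ∈ S | o ≤ y}.Nonempty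
    · have h3 := Nat.sInf_mem hne
      rw [← h1 hne] at h3
      left
      refine ⟨h3.2, ?_⟩
      by_cases hyo : y < o
      · exact Or.inl hyo
      · right
        rw [h1 hne]
        exact Nat.sInf_le ⟨hy, by omega⟩
    · have h3 : ∀ y ∈ S, y < o := by
        intro y hy
        by_contra hc
        exact hne ⟨y, hy, by omega⟩
      right
      refine ⟨h3 x hx, h3 y hy, ?_⟩
      rw [h2 hne]
      exact Nat.sInf_le hy
  · intro h
    unfold gle at h
    constructor
    · rintro ⟨y, hy⟩
      have h3 := h y hy.1
      have h4 := hy.2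
      apply le_antisymm
      · have h5 := Nat.sInf_mem (⟨y, hy⟩ : {y ∈ S | o ≤ y}.Nonempty)
        have h6 := h _ h5.1
        have h7 := h5.2
        omega
      · exact Nat.sInf_le ⟨hx, by omega⟩
    · intro hne
      have h3 : ∀ y ∈ S, y < o := by
        intro y hy
        by_contra hc
        exact hne ⟨y, hy, by omega⟩
      apply le_antisymm
      · have h5 := Nat.sInf_mem (⟨x, hx⟩ : S.Nonempty)
        have h6 := h _ h5
        have h7 := h3 _ hx
        omega
      · exact Nat.sInf_le hx

lemma mem_arm (n : ℕ) (mu : ℕ → ℕ) (hmu : Antidominant n mu) (i j : ℕ) (h : (i, j) ∈ dgF n mu)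
    (v : ℕ × ℕ) : v ∈ armF n mu (i, j) ↔ v ∈ dgF n mu ∧ v.1 < i ∧ v.2 = j := by
  obtain ⟨i', j'⟩ := v
  have h1 := (mem_dgF _ _ _ _).mp h
  simp only [armF, mem_union, mem_filter]
  constructor
  · rintro (⟨h2, h3⟩ | ⟨h2, h3⟩)
    · exact ⟨h2, h3.1, h3.2.1⟩
    · exfalso
      have h4 : i' ≤ n := by
        rw [augF, mem_union] at h2
        rcases h2 with h2 | h2
        · exact ((mem_dgF _ _ _ _).mp h2).2.1
        · rw [mem_image] at h2
          obtain ⟨x, hx, hx2⟩ := h2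
          rw [mem_Icc] at hx
          rw [Prod.mk.injEq] at hx2
          omega
      have := hmu i i' h1.1 (by omega) h4
      omega
  · rintro ⟨h2, h3, h4⟩
    left
    have h5 := (mem_dgF _ _ _ _).mp h2
    exact ⟨h2, h3, h4, hmu i' i h5.1 (by omega) h1.2.1⟩

lemma greedy_iff (n : ℕ) (mu : ℕ → ℕ) (hmu : Antidominant n mu) (τ : ℕ × ℕ → ℕ) :
    GreedyRule n mu τ ↔ ∀ i i' j, (i, j + 1) ∈ dgF n mu → 1 ≤ j → i' ≤ i →
      (i', j + 1) ∈ dgF n mu → gle (τ (i, j)) (τ (i, j + 1)) (τ (i', j + 1)) := by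
  unfold GreedyRule
  constructor
  · intro h i i' j hi hj hle hi'
    have h1 := (rule_iff _ (τ (dbox (i, j + 1))) (τ (i, j + 1)) (by simp)).mp
      (h (i, j + 1) hi (by simp only; omega))
    apply h1
    by_cases he : i' = i
    · right; rw [he]; rfl
    · left
      refine ⟨(i', j + 1), ?_, rfl⟩
      rw [mem_coe, mem_arm n mu hmu i (j + 1) hi]
      exact ⟨hi', by simp only; omega, rfl⟩
  · rintro h ⟨i, j⟩ hu hj
    rw [rule_iff _ _ _ (by simp)]
    simp only at hj
    obtain ⟨j, rfl⟩ : ∃ j', j = j' + 1 := ⟨j - 1, by omega⟩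
    rintro y (⟨⟨i', j'⟩, hv, rfl⟩ | hy)
    · rw [mem_coe, mem_arm n mu hmu i (j + 1) hu] at hv
      obtain ⟨h1, h2, h3⟩ := hv
      simp only at h2 h3
      subst h3
      exact h i i' j hu (by omega) (by omega) h1
    · rw [Set.mem_singleton_iff] at hy
      rw [hy]
      exact h i i j hu (by omega) le_rfl hu

lemma good_iff (n : ℕ) (mu : ℕ → ℕ) (hmu : Antidominant n mu) (a k : ℕ → ℕ) (τ : ℕ × ℕ → ℕ)
    (hoff : ∀ u, u ∉ dgF n mu → τ u = 0) :
    CCond n mu a k τ ↔ Good n mu a (fun t => (k t : ℤ)) τ := by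
  unfold CCond
  rw [greedy_iff n mu hmu]
  constructor
  · rintro ⟨h1, h2, h3, h4, h5⟩
    refine ⟨hoff, h1, h2, ?_, ?_, h4, ?_⟩
    · intro i i' j hi hi' hne
      refine h3 _ hi _ hi' ⟨?_, Or.inl rfl⟩
      intro h
      rw [Prod.mk.injEq] at h
      exact hne h.1
    · intro i i' j hi hi' hlt
      refine h3 _ hi _ hi' ⟨?_, Or.inr (Or.inl ⟨rfl, hlt⟩)⟩
      intro h
      rw [Prod.mk.injEq] at h
      omega
    · intro t ht
      rw [mem_Icc] at ht
      rw [h5 t ht.1 ht.2]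
  · intro h
    refine ⟨h.bd, h.bot, ?_, h.greedy, ?_⟩
    · rintro ⟨i, j⟩ hu ⟨i', j'⟩ hv ⟨hne, h2⟩
      simp only at h2
      rcases h2 with h2 | ⟨h2, h3⟩ | ⟨h2, h3⟩
      · subst h2
        exact h.row _ _ _ hu hv (fun hh => hne (by rw [hh]))
      · subst h2
        exact h.cross _ _ _ hu hv h3
      · subst h2
        exact (h.cross _ _ _ hv hu h3).symm
    · intro i h1 h2
      have := h.cont i (mem_Icc.mpr ⟨h1, h2⟩)
      exact_mod_cast this

lemma map_cCoef (φ : Polynomial ℤ →+* K) (n : ℕ) (mu : ℕ → ℕ) (hmu : Antidominant n mu)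
    (a k : ℕ → ℕ) :
    φ (cCoef n mu a k) = cZ (φ Polynomial.X) n mu a (fun t => (k t : ℤ)) := by
  classical
  have hoff : ∀ f, ∀ u, u ∉ dgF n mu → ext n mu f u = 0 := by
    intro f u hu
    simp [ext, hu]
  unfold cCoef cZ
  rw [map_sum]
  refine sum_bij (fun f _ => ext n mu f) ?_ ?_ ?_ ?_
  · intro f hf
    rw [mem_filter] at hf
    rw [mem_FS, ← good_iff n mu hmu a k _ (hoff f)]
    exact hf.2
  · intro f _ g _ he
    funext u
    have := congrFun he u.1
    simpa [ext, u.2] using this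
  · intro τ hτ
    rw [mem_FS] at hτ
    have he : ext n mu (fun u => τ u.1) = τ := by
      funext u
      unfold ext
      split_ifs with hu
      · rfl
      · exact (hτ.off u hu).symm
    refine ⟨fun u => τ u.1, ?_, he⟩
    rw [mem_filter, Fintype.mem_piFinset, he, good_iff n mu hmu a k τ hτ.off]
    exact ⟨fun u => mem_Icc.mpr (hτ.bd _ u.2), hτ⟩
  · intro f _
    rw [map_pow]

lemma map_qMult (φ : Polynomial ℤ →+* K) (n m : ℕ) (l : ℕ → ℕ) :
    φ (qMultinomial n m l) = ∑ w ∈ WS n m (fun t => (l t : ℤ)), φ Polynomial.X ^ wstat n m w := by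
  unfold qMultinomial
  rw [map_sum]
  refine sum_congr ?_ fun w _ => map_pow _ _ _
  ext w
  simp only [mem_filter, mem_WS, Fintype.mem_piFinset, wc, Nat.cast_inj]

/-- total content of a filling -/
lemma cZ_content (q : K) (n : ℕ) (mu a : ℕ → ℕ) (κ : ℕ → ℤ) (h : cZ q n mu a κ ≠ 0) :
    ∑ t ∈ Icc 1 n, κ t = ∑ i ∈ Icc 1 n, (mu i : ℤ) := by
  have : (FS n mu a κ).Nonempty := by
    by_contra hc
    rw [not_nonempty_iff_eq_empty] at hc
    apply h
    rw [cZ, hc, sum_empty]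
  obtain ⟨τ, hτ⟩ := this
  rw [mem_FS] at hτ
  have h1 : (dgF n mu).card = ∑ t ∈ Icc 1 n, ((dgF n mu).filter fun u => τ u = t).card :=
    card_eq_sum_card_fiberwise fun u hu => mem_coe.mpr (mem_Icc.mpr (hτ.bd u hu))
  have h2 : (dgF n mu).card = ∑ i ∈ Icc 1 n, mu i := by
    unfold dgF
    rw [card_biUnion]
    · refine sum_congr rfl fun i _ => ?_
      rw [card_image_of_injective _ (fun x y h => (Prod.mk.inj h).2)]
      simp
    · intro i _ i' _ hne
      rw [Function.onFun, disjoint_left]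
      intro u hu hu'
      rw [mem_image] at hu hu'
      obtain ⟨x, _, rfl⟩ := hu
      obtain ⟨y, _, hy⟩ := hu'
      exact hne (Prod.mk.inj hy).1.symm
  rw [sum_congr rfl fun t ht => (hτ.cont t ht).symm]
  rw [← Nat.cast_sum, ← Nat.cast_sum, ← h1, h2]

end Trans
end CO

open Finset
namespace CO
section Final
variable {K : Type*} [Field K]

lemma aTuple_state (n : ℕ) (hn : 3 ≤ n) : StateOK n (aTuple n 1 n) 1 := by
  set s := ((Icc 1 n).erase 1).erase n with hs
  have hcard : (s.sort (· ≤ ·)).length = n - 2 := by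
    rw [length_sort, hs, card_erase_of_mem, card_erase_of_mem]
    · simp; omega
    · rw [mem_Icc]; omega
    · rw [mem_erase, mem_Icc]; omega
  have hval : ∀ j ∈ Icc 2 n, j ≠ n → ∃ h : n - 1 - j < (s.sort (· ≤ ·)).length,
      aTuple n 1 n j = (s.sort (· ≤ ·))[n - 1 - j] := by
    intro j hj hne
    rw [mem_Icc] at hj
    refine ⟨by rw [hcard]; omega, ?_⟩
    unfold aTuple
    rw [if_neg hne]
    exact List.getD_eq_getElem _ _ _
  have hmem : ∀ j ∈ Icc 2 n, j ≠ n → aTuple n 1 n j ∈ s := by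
    intro j hj hne
    obtain ⟨h, he⟩ := hval j hj hne
    rw [he, ← mem_sort (· ≤ ·)]
    exact List.getElem_mem h
  have hn' : aTuple n 1 n n = n := by simp [aTuple]
  have hmem' : ∀ j ∈ Icc 2 n, j ≠ n → aTuple n 1 n j ≠ n ∧ aTuple n 1 n j ≠ 1 ∧
      aTuple n 1 n j ∈ Icc 1 n := by
    intro j hj hne
    have := hmem j hj hne
    rw [hs, mem_erase, mem_erase] at this
    exact this
  refine ⟨mem_Icc.mpr (by omega), ?_, ?_, ?_⟩
  · intro i hi
    by_cases h : i = n
    · rw [h, hn', mem_Icc]; omega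
    · exact (hmem' i hi h).2.2
  · intro i hi i' hi' hne
    by_cases h : i = n
    · have h' : i' ≠ n := by omega
      rw [h, hn']
      exact (hmem' i' hi' h').1.symm
    · by_cases h' : i' = n
      · rw [h', hn']
        exact (hmem' i hi h).1
      · obtain ⟨h1, e1⟩ := hval i hi h
        obtain ⟨h2, e2⟩ := hval i' hi' h'
        rw [e1, e2]
        intro he
        have := (List.Nodup.getElem_inj_iff (sort_nodup s (· ≤ ·))).mp he
        rw [mem_Icc] at hi hi'
        omega
  · intro i hi
    by_cases h : i = n
    · rw [h, hn']; omega
    · exact (hmem' i hi h).2.1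

/-- the letter attached to an index modulo `n` -/
def lt (n : ℕ) (i : Fin n) : ℕ := if (i : ℕ) = 0 then n else i

lemma lt_mem (n : ℕ) (i : Fin n) : lt n i ∈ Icc 1 n := by
  have := i.2
  unfold lt
  rw [mem_Icc]
  split_ifs <;> omega

lemma lt_inj (n : ℕ) : Function.Injective (lt n) := by
  intro i j h
  have := i.2
  have := j.2
  unfold lt at h
  apply Fin.ext
  split_ifs at h <;> omega

lemma lt_surj (n : ℕ) (t : ℕ) (ht : t ∈ Icc 1 n) : ∃ i, lt n i = t := by
  rw [mem_Icc] at ht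
  by_cases h : t = n
  · exact ⟨⟨0, by omega⟩, by simp [lt, h]⟩
  · refine ⟨⟨t, by omega⟩, ?_⟩
    unfold lt
    rw [if_neg (by simp only; omega)]

lemma lt_image (n : ℕ) : Icc 1 n = univ.image (lt n) := by
  ext t
  rw [mem_image]
  constructor
  · intro ht
    obtain ⟨i, hi⟩ := lt_surj n t ht
    exact ⟨i, mem_univ _, hi⟩
  · rintro ⟨i, _, rfl⟩
    exact lt_mem n i

lemma lt_sum {M : Type*} [AddCommMonoid M] (n : ℕ) (f : ℕ → M) :
    ∑ t ∈ Icc 1 n, f t = ∑ i, f (lt n i) := by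
  rw [lt_image, sum_image (fun i _ j _ h => lt_inj n h)]

lemma lt_prod {M : Type*} [CommMonoid M] (n : ℕ) (f : ℕ → M) :
    ∏ t ∈ Icc 1 n, f t = ∏ i, f (lt n i) := by
  rw [lt_image, prod_image (fun i _ j _ h => lt_inj n h)]

lemma liftFin_prod {M : Type*} [CommMonoid M] (n : ℕ) (l : Fin n → ℕ) (g : ℕ → M) :
    ∏ t ∈ Icc 1 n, g (liftFin n l t) = ∏ i, g (l i) := by
  rw [Icc_eq, prod_Ico_eq_prod_range, prod_range]
  refine prod_congr rfl fun i _ => ?_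
  have : 1 + (i : ℕ) - 1 = i := by omega
  simp [liftFin]

lemma liftFin_sum {M : Type*} [AddCommMonoid M] (n : ℕ) (l : Fin n → ℕ) (g : ℕ → M) :
    ∑ t ∈ Icc 1 n, g (liftFin n l t) = ∑ i, g (l i) := by
  rw [Icc_eq, sum_Ico_eq_sum_range, sum_range]
  refine sum_congr rfl fun i _ => ?_
  simp [liftFin]

lemma map_qMult_fin (φ : Polynomial ℤ →+* K) (hq : Gen (φ Polynomial.X)) (n m : ℕ) (hn : 1 ≤ n)
    (l : Fin n → ℕ) (hl : ∑ i, l i = m) :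
    φ (qMultinomial n m (liftFin n l)) =
      qf (φ Polynomial.X) m * ∏ i, fi (φ Polynomial.X) (l i) := by
  rw [map_qMult, wZ_closed hq n hn m, liftFin_prod n l (fun x => fi (φ Polynomial.X) (x : ℤ))]
  rw [liftFin_sum n l (fun x => (x : ℤ)), ← hl]
  push_cast
  rfl

theorem rhs_closed (φ : Polynomial ℤ →+* K) (hq : Gen (φ Polynomial.X)) (n : ℕ) (hn : 3 ≤ n)
    (m₁ m₂ : ℕ) (k : ℕ → ℕ) (hk : ∑ t ∈ Icc 1 n, (k t : ℤ) = m₁ + (n - 1) * m₂) :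
    φ (∑ lp ∈ ((Fintype.piFinset fun _ : Fin n => Finset.range (m₂ + 1)) ×ˢ
            (Fintype.piFinset fun _ : Fin n => Finset.range (m₁ + 1))).filter
          fun lp => (∑ i, lp.1 i) = m₂ ∧ (∑ i, lp.2 i) = m₁ ∧
            ∀ i : Fin n, lp.2 i + (∑ α ∈ Finset.univ.erase i, lp.1 α) =
              (if (i : ℕ) = 0 then k n else k (i : ℕ)),
        Polynomial.X ^ (lp.1 ⟨0, by omega⟩ * lp.2 ⟨0, by omega⟩ +
            (∑ α ∈ Finset.univ.erase (⟨1, by omega⟩ : Fin n), lp.1 α) +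
            ∑ α ∈ Finset.univ.erase (⟨0, by omega⟩ : Fin n), lp.2 α) *
          qMultinomial n m₂ (liftFin n lp.1) * qMultinomial n m₁ (liftFin n lp.2)) =
      GG (φ Polynomial.X) n m₂ 1 n (fun t => (k t : ℤ) - m₂) := by
  set q := φ Polynomial.X with hqd
  set d : ℕ → ℤ := fun t => (k t : ℤ) - m₂ with hd
  have hdsum : (m₂ : ℤ) + ∑ t ∈ Icc 1 n, d t = m₁ := by
    rw [hd, sum_sub_distrib, hk]
    simp
    ring
  have hkl : ∀ i : Fin n, (if (i : ℕ) = 0 then k n else k (i : ℕ)) = k (lt n i) := by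
    intro i
    unfold lt
    split_ifs <;> rfl
  unfold GG
  rw [hdsum, Int.toNat_natCast, map_sum, mul_sum]
  obtain ⟨P, hP⟩ : ∃ P : (ℕ → ℕ) → Prop, ∀ l, P l ↔ ∀ t ∈ Icc 1 n, 0 ≤ (l t : ℤ) + d t :=
    ⟨_, fun _ => Iff.rfl⟩
  haveI : DecidablePred P := Classical.decPred P
  rw [← sum_filter_of_ne (s := piAntidiag (Icc 1 n) m₂) (p := P)]
  swap
  · intro l _ hne
    rw [hP]
    intro t ht
    by_contra hc
    apply hne
    have : PP q (Icc 1 n) d l = 0 := by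
      unfold PP
      apply prod_eq_zero ht
      rw [fi_neg q (x := (l t : ℤ) + d t) (by omega), mul_zero]
    rw [this, mul_zero, mul_zero]
  symm
  refine sum_bij (fun l _ => ((fun i => l (lt n i)), (fun i => ((l (lt n i) : ℤ) + d (lt n i)).toNat)))
    ?_ ?_ ?_ ?_
  · intro l hl
    rw [mem_filter, mem_piAntidiag, hP] at hl
    obtain ⟨⟨hl1, hl2⟩, hl3⟩ := hl
    have hs1 : ∑ i, l (lt n i) = m₂ := by rw [← lt_sum n l, hl1]
    have hp : ∀ i, ((((l (lt n i) : ℤ) + d (lt n i)).toNat : ℕ) : ℤ) = l (lt n i) + d (lt n i) :=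
      fun i => Int.toNat_of_nonneg (hl3 _ (lt_mem n i))
    have hs2 : ∑ i, ((l (lt n i) : ℤ) + d (lt n i)).toNat = m₁ := by
      zify
      rw [sum_congr rfl (fun i _ => hp i), ← lt_sum n (fun t => (l t : ℤ) + d t), sum_add_distrib,
        ← hdsum, ← hl1]
      push_cast
      rfl
    rw [mem_filter, mem_product, Fintype.mem_piFinset, Fintype.mem_piFinset]
    simp only [mem_range]
    refine ⟨⟨fun i => ?_, fun i => ?_⟩, hs1, hs2, fun i => ?_⟩
    · have := single_le_sum (f := fun i => l (lt n i)) (fun _ _ => Nat.zero_le _) (mem_univ i)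
      omega
    · have := single_le_sum (f := fun i => ((l (lt n i) : ℤ) + d (lt n i)).toNat) (fun _ _ => Nat.zero_le _) (mem_univ i)
      omega
    · rw [hkl]
      have h1 := add_sum_erase univ (fun i => l (lt n i)) (mem_univ i)
      have h2 := hp i
      have h3 : d (lt n i) = (k (lt n i) : ℤ) - m₂ := rfl
      omega
  · intro l hl l' hl' he
    rw [mem_filter, mem_piAntidiag] at hl hl'
    funext t
    by_cases ht : t ∈ Icc 1 n
    · obtain ⟨i, rfl⟩ := lt_surj n t ht
      exact congrFun (Prod.mk.inj he).1 i
    · have h1 : l t = 0 := by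
        by_contra hc
        exact ht (hl.1.2 t hc)
      have h2 : l' t = 0 := by
        by_contra hc
        exact ht (hl'.1.2 t hc)
      rw [h1, h2]
  · rintro ⟨l, p⟩ hlp
    rw [mem_filter] at hlp
    obtain ⟨_, hs1, hs2, hc⟩ := hlp
    simp only at hs1 hs2 hc
    have hne : Nonempty (Fin n) := ⟨⟨0, by omega⟩⟩
    choose! idx hidx using lt_surj n
    have hidx' : ∀ i, idx (lt n i) = i := fun i => lt_inj n (hidx _ (lt_mem n i))
    set l' : ℕ → ℕ := fun t => if t ∈ Icc 1 n then l (idx t) else 0 with hl'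
    have hl'2 : ∀ i, l' (lt n i) = l i := by
      intro i
      rw [hl']
      simp only
      rw [if_pos (lt_mem n i), hidx']
    have hp : ∀ i, (p i : ℤ) = l i + d (lt n i) := by
      intro i
      have h1 := add_sum_erase univ l (mem_univ i)
      have h2 := hc i
      rw [hkl] at h2
      have h3 : d (lt n i) = (k (lt n i) : ℤ) - m₂ := rfl
      omega
    refine ⟨l', ?_, ?_⟩
    · rw [mem_filter, mem_piAntidiag, hP]
      refine ⟨⟨?_, ?_⟩, ?_⟩
      · rw [lt_sum, ← hs1]
        exact sum_congr rfl fun i _ => hl'2 i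
      · intro t ht
        by_contra hc
        exact ht (if_neg hc)
      · intro t ht
        obtain ⟨i, rfl⟩ := lt_surj n t ht
        rw [hl'2, ← hp i]
        positivity
    · refine Prod.ext ?_ ?_
      · funext i
        exact hl'2 i
      · funext i
        simp only
        rw [hl'2, ← hp i, Int.toNat_natCast]
  · intro l hl
    rw [mem_filter, mem_piAntidiag, hP] at hl
    obtain ⟨⟨hl1, hl2⟩, hl3⟩ := hl
    have hs1 : ∑ i, l (lt n i) = m₂ := by rw [← lt_sum n l, hl1]
    have hp : ∀ i, ((((l (lt n i) : ℤ) + d (lt n i)).toNat : ℕ) : ℤ) = l (lt n i) + d (lt n i) :=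
      fun i => Int.toNat_of_nonneg (hl3 _ (lt_mem n i))
    have hs2 : ∑ i, ((l (lt n i) : ℤ) + d (lt n i)).toNat = m₁ := by
      zify
      rw [sum_congr rfl (fun i _ => hp i), ← lt_sum n (fun t => (l t : ℤ) + d t), sum_add_distrib,
        ← hdsum, ← hl1]
      push_cast
      rfl
    have hq1 := map_qMult_fin φ hq n m₂ (by omega) _ hs1
    have hq2 := map_qMult_fin φ hq n m₁ (by omega) _ hs2
    simp only [map_mul, map_pow, hq1, hq2]
    rw [← hqd]
    have hPP : PP q (Icc 1 n) d l = (∏ i, fi q ((l (lt n i) : ℕ) : ℤ)) *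
        ∏ i, fi q ((((l (lt n i) : ℤ) + d (lt n i)).toNat : ℕ) : ℤ) := by
      unfold PP
      rw [prod_mul_distrib, lt_prod, lt_prod n (fun i => fi q ((l i : ℤ) + d i))]
      congr 1
      exact prod_congr rfl fun i _ => by rw [hp i]
    rw [hPP]
    have h0 : lt n ⟨0, by omega⟩ = n := by simp [lt]
    have h1 : lt n ⟨1, by omega⟩ = 1 := by simp [lt]
    have a1 := add_sum_erase univ (fun i => l (lt n i)) (mem_univ (⟨1, by omega⟩ : Fin n))
    have a2 := add_sum_erase univ (fun i => ((l (lt n i) : ℤ) + d (lt n i)).toNat)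
      (mem_univ (⟨0, by omega⟩ : Fin n))
    have a3 := hp ⟨0, by omega⟩
    have a4 : (l 1 : ℤ) + Qs n 1 (fun i => (l i : ℤ)) = m₂ := by
      have := PQ n 1 (by omega) (fun i => (l i : ℤ))
      rw [Ps_succ 1 le_rfl, Ps_one, zero_add] at this
      rw [this, ← hl1]
      push_cast
      rfl
    have a5 : Ps n (fun i => (l i : ℤ) + d i) + (l n + d n) = m₁ := by
      have h2 := Ps_succ n (by omega) (fun i => (l i : ℤ) + d i)
      rw [← h2, Ps, ← Icc_eq, sum_add_distrib, ← hdsum, ← hl1]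
      push_cast
      rfl
    simp only [h0, h1] at a1 a2 a3
    have hE : q ^ (l (lt n ⟨0, by omega⟩) * ((l (lt n ⟨0, by omega⟩) : ℤ) + d (lt n ⟨0, by omega⟩)).toNat +
        (∑ α ∈ univ.erase (⟨1, by omega⟩ : Fin n), l (lt n α)) +
        ∑ α ∈ univ.erase (⟨0, by omega⟩ : Fin n), ((l (lt n α) : ℤ) + d (lt n α)).toNat) =
        q ^ (Qs n 1 (fun i => (l i : ℤ)) + Ps n (fun i => (l i : ℤ) + d i) +
          (l n : ℤ) * (l n + d n)) := by
      rw [← zpow_natCast, h0]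
      congr 1
      push_cast only [Nat.cast_add, Nat.cast_mul]
      rw [a3]
      have b1 : ((∑ α ∈ univ.erase (⟨1, by omega⟩ : Fin n), l (lt n α) : ℕ) : ℤ) =
          Qs n 1 (fun i => (l i : ℤ)) := by omega
      have b2 : ((∑ α ∈ univ.erase (⟨0, by omega⟩ : Fin n),
          ((l (lt n α) : ℤ) + d (lt n α)).toNat : ℕ) : ℤ) = Ps n (fun i => (l i : ℤ) + d i) := by
        omega
      rw [b1, b2]
      ring
    rw [hE]
    ring

end Final
end CO

open CO in
/-- Closed formula for `c^{λ⁺}_{1|n}` with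
`λ⁺ = (0, m₂+1, …, m₂+1, m₁+m₂+1)`:
`c^{λ⁺}_{1|n}(k₁, k₂+1, …, k_n+1)
  = Σ_{l,p} q^{l₁p₁ + l₁ + l₃ + ⋯ + l_n + p₂ + ⋯ + p_n} binom_q(m₂; l) binom_q(m₁; p)`,
the sum being over `l, p ∈ ℤ_{≥0}^n` with `Σl = m₂`, `Σp = m₁`, and
`p_i + Σ_{α≠i} l_α = k_{i-1}` for all `i` (indices mod `n`, `k₀ := k_n`). -/
theorem cbar_closed_formula_scrolled (n : ℕ) (hn : 3 ≤ n) (m₁ m₂ : ℕ)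
    (lamP : ℕ → ℕ)
    (hlamP : lamP = fun i => if i = n then m₁ + m₂ + 1 else if 2 ≤ i then m₂ + 1 else 0)
    (k : ℕ → ℕ) :
    cBar n lamP 1 n (fun i => if i = 1 then k i else k i + 1)
      = ∑ lp ∈ ((Fintype.piFinset fun _ : Fin n => Finset.range (m₂ + 1)) ×ˢ
            (Fintype.piFinset fun _ : Fin n => Finset.range (m₁ + 1))).filter
          fun lp => (∑ i, lp.1 i) = m₂ ∧ (∑ i, lp.2 i) = m₁ ∧
            ∀ i : Fin n, lp.2 i + (∑ α ∈ Finset.univ.erase i, lp.1 α) =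
              (if (i : ℕ) = 0 then k n else k (i : ℕ)),
        Polynomial.X ^ (lp.1 ⟨0, by omega⟩ * lp.2 ⟨0, by omega⟩ +
            (∑ α ∈ Finset.univ.erase (⟨1, by omega⟩ : Fin n), lp.1 α) +
            ∑ α ∈ Finset.univ.erase (⟨0, by omega⟩ : Fin n), lp.2 α) *
          qMultinomial n m₂ (liftFin n lp.1) * qMultinomial n m₁ (liftFin n lp.2) := by
  have hinj : Function.Injective
      (algebraMap (Polynomial ℤ) (FractionRing (Polynomial ℤ))) :=
    IsFractionRing.injective _ _
  set φ := algebraMap (Polynomial ℤ) (FractionRing (Polynomial ℤ)) with hφ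
  have hq : Gen (φ Polynomial.X) := by
    constructor
    · intro h
      rw [← map_zero φ] at h
      exact Polynomial.X_ne_zero (hinj h)
    · intro j hj h
      rw [← map_pow, ← map_one φ] at h
      have h2 := congrArg Polynomial.natDegree (hinj h)
      rw [Polynomial.natDegree_X_pow, Polynomial.natDegree_one] at h2
      omega
  have hanti : Antidominant n lamP := by
    subst hlamP
    unfold Antidominant
    intros
    dsimp only
    split_ifs <;> omega
  apply hinj
  unfold cBar
  rw [map_cCoef φ n lamP hanti]
  by_cases hk : ∑ t ∈ Icc 1 n, (k t : ℤ) = m₁ + (n - 1) * m₂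
  · rw [rhs_closed φ hq n hn m₁ m₂ k hk]
    have han : aTuple n 1 n n = n := by simp [aTuple]
    have := full_closed hq n (by omega) m₁ m₂ lamP (aTuple n 1 n) 1
      (fun t => (((if t = 1 then k t else k t + 1 : ℕ)) : ℤ))
      (fun t => (k t : ℤ) - m₂) (by
        intro i hi
        subst hlamP
        dsimp only) (aTuple_state n hn) (by
        intro t ht
        split_ifs <;> push_cast <;> ring) (by
        rw [sum_sub_distrib, hk]
        simp
        ring)
    rw [this, han]
  · have h1 : cZ (φ Polynomial.X) n lamP (aTuple n 1 n)
        (fun t => (((if t = 1 then k t else k t + 1 : ℕ)) : ℤ)) = 0 := by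
      by_contra hne
      apply hk
      have hc := cZ_content _ _ _ _ _ hne
      have e1 : ∀ t ∈ Icc 1 n, (((if t = 1 then k t else k t + 1 : ℕ)) : ℤ)
          = (k t : ℤ) + 1 - (if t = 1 then 1 else 0) := by
        intro t _
        split_ifs <;> push_cast <;> ring
      have e2 : ∀ t ∈ Icc 1 n, (lamP t : ℤ)
          = ((m₂ : ℤ) + 1) - (if t = 1 then (m₂ : ℤ) + 1 else 0) + (if t = n then (m₁ : ℤ) else 0) := by
        intro t ht
        rw [mem_Icc] at ht
        subst hlamP
        dsimp only
        split_ifs <;> push_cast <;> first | omega | ring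
      rw [sum_congr rfl e1, sum_congr rfl e2, sum_sub_distrib, sum_add_distrib, sum_add_distrib,
        sum_sub_distrib, sum_ite_eq', sum_ite_eq', sum_ite_eq',
        if_pos (mem_Icc.2 ⟨le_refl 1, by omega⟩), if_pos (mem_Icc.2 ⟨le_refl 1, by omega⟩),
        if_pos (mem_Icc.2 ⟨by omega, le_refl n⟩)] at hc
      simp only [sum_const, Nat.card_Icc, nsmul_eq_mul, Nat.add_sub_cancel] at hc
      linarith
    rw [h1, filter_eq_empty_iff.2, sum_empty, map_zero]
    rintro ⟨l, p⟩ _ ⟨hl, hp, hc⟩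
    dsimp only at hl hp hc
    apply hk
    have hkl : ∀ i : Fin n, (k (lt n i) : ℤ) = (p i : ℤ) + m₂ - l i := by
      intro i
      have e : (if (i : ℕ) = 0 then k n else k (i : ℕ)) = k (lt n i) := by
        unfold lt
        split_ifs <;> rfl
      rw [← e, ← hc i, ← hl, ← add_sum_erase univ l (mem_univ i)]
      push_cast
      ring
    rw [lt_sum n (fun t => (k t : ℤ)), sum_congr rfl (fun i _ => hkl i), sum_sub_distrib,
      sum_add_distrib, ← Nat.cast_sum univ p, ← Nat.cast_sum univ l, hl, hp]
    simp
    ring
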